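/- arXiv:1412.7905 — 2 statements merged into one kernel-verified Lean document; each statement's English description precedes it below -/
import Mathlib

section
/- For p > 0 let G_p := (A^p # B^p)^{2/p} and let λ_1(G_p) ≥ … ≥ λ_d(G_p) be its eigenvalues in decreasing order with multiplicities. Then for every i = 1,…,d the limit λ̂_i := lim_{p→∞} λ_i(G_p) exists, a_1 b_1 ≥ λ̂_1 ≥ ⋯ ≥ λ̂_d ≥ a_d b_d, and the log-majorizations (a_i b_{d+1-i})_{i=1}^d ≺_(log) (λ̂_i)_{i=1}^d ≺_(log) (a_i b_i)_{i=1}^d hold. -/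
open Matrix Filter Topology Finset
open scoped ComplexOrder

/-- Functional-calculus power of a (Hermitian, in practice positive semidefinite)
matrix, with the convention `0 ^ r = 0` for `r > 0`. -/
noncomputable def psdPow {d : ℕ} (A : Matrix (Fin d) (Fin d) ℂ) (r : ℝ) :
    Matrix (Fin d) (Fin d) ℂ :=
  if hA : A.IsHermitian then
    (hA.eigenvectorUnitary : Matrix (Fin d) (Fin d) ℂ) *
      Matrix.diagonal (fun i => ((hA.eigenvalues i ^ r : ℝ) : ℂ)) *
      star (hA.eigenvectorUnitary : Matrix (Fin d) (Fin d) ℂ)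
  else 0

/-- The eigenvalues of a Hermitian matrix, sorted in decreasing order
(with multiplicities). -/
noncomputable def eigsDesc {d : ℕ} (A : Matrix (Fin d) (Fin d) ℂ) : Fin d → ℝ :=
  if hA : A.IsHermitian then
    fun i => hA.eigenvalues (Tuple.sort hA.eigenvalues i.rev)
  else 0

/-- The geometric mean `X # Y = X^{1/2} (X^{-1/2} Y X^{-1/2})^{1/2} X^{1/2}`,
as used for positive definite `X` (negative functional-calculus powers are taken in the
generalized-inverse sense). -/
noncomputable def geoMeanPD {d : ℕ} (X Y : Matrix (Fin d) (Fin d) ℂ) :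
    Matrix (Fin d) (Fin d) ℂ :=
  psdPow X (1 / 2) *
    psdPow (psdPow X (-(1 / 2)) * Y * psdPow X (-(1 / 2))) (1 / 2) *
    psdPow X (1 / 2)

/-- The geometric mean of two positive semidefinite matrices:
`X # Y := lim_{ε↓0} (X + εI) # (Y + εI)`. -/
noncomputable def geoMean {d : ℕ} (X Y : Matrix (Fin d) (Fin d) ℂ) :
    Matrix (Fin d) (Fin d) ℂ :=
  limUnder (nhdsWithin (0 : ℝ) (Set.Ioi 0))
    (fun ε : ℝ => geoMeanPD (X + (ε : ℂ) • 1) (Y + (ε : ℂ) • 1))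

/-- `Gmat A B p = (A^p # B^p)^{2/p}`. -/
noncomputable def Gmat {d : ℕ} (A B : Matrix (Fin d) (Fin d) ℂ) (p : ℝ) :
    Matrix (Fin d) (Fin d) ℂ :=
  psdPow (geoMean (psdPow A p) (psdPow B p)) (2 / p)

/-- The decreasing rearrangement of a tuple of reals. -/
noncomputable def sortDesc {d : ℕ} (x : Fin d → ℝ) : Fin d → ℝ :=
  fun i => x (Tuple.sort x i.rev)

/-- Log-majorization `x ≺_(log) y` of tuples of nonnegative reals: each partial product
of the `k` largest entries of `x` is at most the corresponding one for `y`, with equality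
for the full products. -/
def IsLogMaj {d : ℕ} (x y : Fin d → ℝ) : Prop :=
  (∀ k : Fin d, ∏ i ∈ Finset.Iic k, sortDesc x i ≤ ∏ i ∈ Finset.Iic k, sortDesc y i) ∧
    ∏ i, x i = ∏ i, y i

/-!
The Ando–Hiai inequality `x # y ≤ 1 → x ^ r # y ^ r ≤ 1` for `1 ≤ r ≤ 2` bounds the largest
eigenvalue of `x ^ r # y ^ r` by the `r`-th power of that of `x # y`. Applied to the compound
matrices, which respect products, powers and geometric means, it bounds in the same way the product
of the `k` largest eigenvalues, for every `k`. Hence these products decrease in `p` for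
`G_p = (A ^ p # B ^ p) ^ (2 / p)`, and their limits determine those of the single eigenvalues.

The geometric mean `G = X # Y` satisfies `G X⁻¹ G = Y`, so `G² = X^{1/2} P X^{1/2}` up to unitary
conjugation, where `P = X^{-1/2} G² X^{-1/2}` has the eigenvalues of `Y`. The Gelfand–Naimark
inequality for such a product sandwiches the eigenvalues of `G²`, and with them those of `G_p` for
every `p`, between `(a_i b_{d+1-i})` and `(a_i b_i)`. All these inequalities extend from definite to
semidefinite matrices by continuity of the eigenvalues, and then to `p → ∞`.
-/

section CStarAlgebra

open CFC Ring

variable {𝒜 : Type*} [CStarAlgebra 𝒜] [PartialOrder 𝒜] [StarOrderedRing 𝒜] {x y g : 𝒜}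

/-- The geometric mean `x # y = x^{1/2} (x^{-1/2} y x^{-1/2})^{1/2} x^{1/2}` in a C⋆-algebra. It is
meaningful for strictly positive `x` only, since `x⁻¹ʳ` is `0` when `x` is not invertible. -/
noncomputable def sharp (x y : 𝒜) : 𝒜 := conjSqrt x (sqrt (conjSqrt x⁻¹ʳ y))

lemma conjSqrt_nonneg (c : 𝒜) (hx : 0 ≤ x) : 0 ≤ conjSqrt c x := by
  simpa using conjSqrt_monotone (c := c) hx

lemma sharp_nonneg (x y : 𝒜) : 0 ≤ sharp x y := conjSqrt_nonneg x (sqrt_nonneg _)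

lemma isStrictlyPositive_sharp (hx : IsStrictlyPositive x) (hy : IsStrictlyPositive y) :
    IsStrictlyPositive (sharp x y) := by
  have h := (isStrictlyPositive_conjSqrt_iff x⁻¹ʳ y hx.ringInverse).2 hy
  exact (isStrictlyPositive_conjSqrt_iff x _).2 (by cfc_tac)

lemma conjSqrt_mul_ringInverse_mul_conjSqrt (hx : IsStrictlyPositive x) (a b : 𝒜) :
    conjSqrt x a * x⁻¹ʳ * conjSqrt x b = conjSqrt x (a * b) := by
  have h : sqrt x * x⁻¹ʳ * sqrt x = 1 := by
    simpa [conjSqrt_apply, inverse_inverse hx.isUnit] using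
      conjSqrt_ringInverse_self _ hx.ringInverse
  calc conjSqrt x a * x⁻¹ʳ * conjSqrt x b
      = sqrt x * a * (sqrt x * x⁻¹ʳ * sqrt x) * b * sqrt x := by
        simp only [conjSqrt_apply, mul_assoc]
    _ = conjSqrt x (a * b) := by simp only [h, conjSqrt_apply, mul_assoc, one_mul]

lemma sharp_mul_ringInverse_mul_sharp (hx : IsStrictlyPositive x) (hy : 0 ≤ y) :
    sharp x y * x⁻¹ʳ * sharp x y = y := by
  rw [sharp, conjSqrt_mul_ringInverse_mul_conjSqrt hx,
    sqrt_mul_sqrt_self _ (conjSqrt_nonneg _ hy), conjSqrt_conjSqrt_ringInverse x y]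

lemma sharp_eq_of_mul_ringInverse_mul (hx : IsStrictlyPositive x) (hg : 0 ≤ g)
    (h : g * x⁻¹ʳ * g = y) : sharp x y = g := by
  have hsq : conjSqrt x⁻¹ʳ y = conjSqrt x⁻¹ʳ g * conjSqrt x⁻¹ʳ g := by
    have hv := sqrt_mul_sqrt_self x⁻¹ʳ hx.ringInverse.nonneg
    rw [← h]
    nth_rw 2 [← hv]
    simp only [conjSqrt_apply, mul_assoc]
  rw [sharp, hsq, sqrt_mul_self _ (conjSqrt_nonneg _ hg), conjSqrt_conjSqrt_ringInverse x g]

lemma sharp_comm (hx : IsStrictlyPositive x) (hy : IsStrictlyPositive y) :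
    sharp x y = sharp y x := by
  have hg := isStrictlyPositive_sharp hx hy
  have h := sharp_mul_ringInverse_mul_sharp hx hy.nonneg
  refine (sharp_eq_of_mul_ringInverse_mul hy hg.nonneg ?_).symm
  nth_rw 2 [← h]
  rw [inverse_mul (.inr hg.isUnit), inverse_mul (.inl hg.isUnit), inverse_inverse hx.isUnit]
  simp only [mul_assoc, mul_inverse_cancel_left _ _ hg.isUnit, inverse_mul_cancel _ hg.isUnit,
    mul_one]

lemma sharp_mono_right {y' : 𝒜} (h : y ≤ y') : sharp x y ≤ sharp x y' := by
  unfold sharp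
  simp only [sqrt_eq_rpow]
  exact conjSqrt_monotone (rpow_le_rpow (by norm_num) (conjSqrt_monotone h))

lemma sharp_mono {x' y' : 𝒜} (hx : IsStrictlyPositive x) (hy : IsStrictlyPositive y)
    (hxx' : x ≤ x') (hyy' : y ≤ y') : sharp x y ≤ sharp x' y' := by
  have hx' := hx.of_le hxx'
  have hy' := hy.of_le hyy'
  calc sharp x y ≤ sharp x y' := sharp_mono_right hyy'
    _ = sharp y' x := sharp_comm hx hy'
    _ ≤ sharp y' x' := sharp_mono_right hxx'
    _ = sharp x' y' := sharp_comm hy' hx'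

lemma sharp_conj {c : 𝒜} (hc : IsUnit c) (hx : IsStrictlyPositive x) (hy : IsStrictlyPositive y) :
    sharp (c * x * star c) (c * y * star c) = c * sharp x y * star c := by
  have hg := isStrictlyPositive_sharp hx hy
  refine sharp_eq_of_mul_ringInverse_mul (hc.isStrictlyPositive_star_right_conjugate_iff.2 hx)
    (hc.isStrictlyPositive_star_right_conjugate_iff.2 hg).nonneg ?_
  rw [inverse_mul (.inr hc.star), inverse_mul (.inl hc)]
  calc c * sharp x y * star c * ((star c)⁻¹ʳ * (x⁻¹ʳ * c⁻¹ʳ)) * (c * sharp x y * star c)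
      = c * (sharp x y * x⁻¹ʳ * sharp x y) * star c := by
        simp only [mul_assoc, mul_inverse_cancel_left _ _ hc.star, inverse_mul_cancel_left _ _ hc]
    _ = c * y * star c := by rw [sharp_mul_ringInverse_mul_sharp hx hy.nonneg]

lemma sharp_smul {c : ℝ} (hc : 0 < c) (hx : IsStrictlyPositive x) (hy : IsStrictlyPositive y) :
    sharp (c • x) (c • y) = c • sharp x y := by
  have hu : IsUnit (√c • (1 : 𝒜)) :=
    ((isStrictlyPositive_one (A := 𝒜)).smul (Real.sqrt_pos.2 hc)).isUnit
  simpa [smul_smul, Real.mul_self_sqrt hc.le] using sharp_conj hu hx hy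

lemma sharp_rpow_rpow (hx : IsStrictlyPositive x) (p q : ℝ) :
    sharp (x ^ p) (x ^ q) = x ^ ((p + q) / 2) := by
  refine sharp_eq_of_mul_ringInverse_mul (.rpow x p hx) rpow_nonneg ?_
  have h : (x ^ p)⁻¹ʳ = x ^ (-p) := by
    rw [← inverse_mul_eq_iff_eq_mul _ 1 _ (IsStrictlyPositive.rpow x p hx).isUnit |>.2
      (rpow_mul_rpow_neg p hx).symm, mul_one]
  rw [h, ← rpow_add hx.isUnit, ← rpow_add hx.isUnit]
  congr 1
  ring

lemma smul_rpow (hx : IsStrictlyPositive x) {c : ℝ} (hc : 0 < c) (r : ℝ) :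
    (c • x) ^ r = c ^ r • x ^ r := by
  have hpos : ∀ t ∈ spectrum ℝ x, 0 < t := fun t ht => hx.spectrum_pos ht
  have hcont : ContinuousOn (fun t : ℝ => t ^ r) (spectrum ℝ x) :=
    continuousOn_id.rpow_const fun t ht => .inl (hpos t ht).ne'
  rw [← cfc_const_mul_id c x, cfc_rpow fun t ht => mul_pos hc (hpos t ht),
    rpow_eq_cfc_real hx.nonneg, ← cfc_const_mul (c ^ r) _ x hcont]
  exact cfc_congr fun t ht => Real.mul_rpow hc.le (hpos t ht).le

lemma conj_unitary_rpow (hx : IsStrictlyPositive x) (w : unitary 𝒜) (r : ℝ) :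
    (w * x * star (w : 𝒜)) ^ r = w * x ^ r * star (w : 𝒜) := by
  have hcont : ContinuousOn (fun t : ℝ => t ^ r) (spectrum ℝ x) :=
    continuousOn_id.rpow_const fun t ht => .inl (hx.spectrum_pos ht).ne'
  have h0 : 0 ≤ (w : 𝒜) * x * star (w : 𝒜) := star_right_conjugate_nonneg hx.nonneg _
  rw [rpow_eq_cfc_real h0, rpow_eq_cfc_real hx.nonneg]
  simpa using (StarAlgHomClass.map_cfc (S := ℂ) (Unitary.conjStarAlgAut ℂ 𝒜 w) _ x hcont
    (by change Continuous fun z => w * z * star (w : 𝒜); fun_prop) hx.isSelfAdjoint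
    (by simpa using h0.isSelfAdjoint)).symm

-- By polar decomposition, `w := t (t⋆t)^{-1/2}` is unitary and `tt⋆ = w (t⋆t) w⋆`.
lemma mul_star_self_rpow {t : 𝒜} (ht : IsUnit t) (r : ℝ) :
    (t * star t) ^ r = t * (star t * t) ^ (r - 1) * star t := by
  have hm : IsStrictlyPositive (star t * t) := by
    simpa using ht.isStrictlyPositive_star_left_conjugate_iff.2 (isStrictlyPositive_one (A := 𝒜))
  generalize hmt : star t * t = m at hm ⊢
  let v := m ^ (-(1 / 2) : ℝ)
  have hv : star v = v := rpow_nonneg.isSelfAdjoint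
  have hpow (s : ℝ) : v * m ^ s * v = m ^ (s - 1) := by
    rw [← rpow_add hm.isUnit, ← rpow_add hm.isUnit]
    congr 1
    ring
  have hvmv : v * m * v = 1 := by
    simpa [rpow_one m hm.nonneg, rpow_zero m hm.nonneg] using hpow 1
  have hw : t * v ∈ unitary 𝒜 := by
    refine (ht.mul (IsStrictlyPositive.rpow m _ hm).isUnit).mem_unitary_of_star_mul_self ?_
    rw [star_mul, hv, mul_assoc, ← mul_assoc (star t), hmt, ← mul_assoc, hvmv]
  calc (t * star t) ^ r = (t * v * m * star (t * v)) ^ r := by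
        rw [star_mul, hv, mul_assoc t v m, ← mul_assoc (t * (v * m)), mul_assoc t (v * m), hvmv,
          mul_one]
    _ = t * v * m ^ r * star (t * v) := conj_unitary_rpow hm ⟨t * v, hw⟩ r
    _ = t * m ^ (r - 1) * star t := by
        rw [star_mul, hv, ← hpow]
        simp only [mul_assoc]

/-! ### The Ando–Hiai inequality -/

lemma rpow_le_conjSqrt_rpow {s : 𝒜} (hx : IsStrictlyPositive x) (hs : IsStrictlyPositive s)
    (h : x ≤ s⁻¹ʳ) {r : ℝ} (hr : r ∈ Set.Icc 1 2) : x ^ r ≤ conjSqrt x (s ^ (1 - r)) := by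
  have hr' : r - 1 ∈ Set.Icc (0 : ℝ) 1 := ⟨by linarith [hr.1], by linarith [hr.2]⟩
  calc x ^ r = conjSqrt x (x ^ (r - 1)) := by
        rw [conjSqrt_apply, sqrt_eq_rpow, ← rpow_add hx.isUnit, ← rpow_add hx.isUnit]
        congr 1
        ring
    _ ≤ conjSqrt x (s⁻¹ʳ ^ (r - 1)) := conjSqrt_monotone (rpow_le_rpow hr' h)
    _ = conjSqrt x (s ^ (1 - r)) := by
        rw [inverse_eq_rpow_neg_one, rpow_rpow _ _ _ (by norm_num)]
        congr 2
        ring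

lemma conjSqrt_mul_self_rpow_le {s : 𝒜} (hx : IsStrictlyPositive x) (hs : IsStrictlyPositive s)
    (h : x ≤ s⁻¹ʳ) {r : ℝ} (hr : r ∈ Set.Icc 1 2) :
    conjSqrt x (s * s) ^ r ≤ conjSqrt x (s ^ (1 + r)) := by
  have hr' : r - 1 ∈ Set.Icc (0 : ℝ) 1 := ⟨by linarith [hr.1], by linarith [hr.2]⟩
  have hu : IsStrictlyPositive (sqrt x) := by cfc_tac
  have hsxs_eq : s * sqrt x * (sqrt x * s) = s * x * s := by
    rw [← mul_assoc, mul_assoc s, sqrt_mul_sqrt_self x]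
  have hsxs : s * x * s ≤ s := by
    simpa [inverse_mul_cancel_right, mul_inverse_cancel _ hs.isUnit] using
      hs.isSelfAdjoint.conjugate_le_conjugate h
  calc conjSqrt x (s * s) ^ r = conjSqrt x (s * (s * x * s) ^ (r - 1) * s) := by
        have hpolar := mul_star_self_rpow (hu.isUnit.mul hs.isUnit) r
        rw [star_mul, hu.isSelfAdjoint.star_eq, hs.isSelfAdjoint.star_eq, hsxs_eq] at hpolar
        simpa only [conjSqrt_apply, mul_assoc] using hpolar
    _ ≤ conjSqrt x (s * s ^ (r - 1) * s) := conjSqrt_monotone <|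
        hs.isSelfAdjoint.conjugate_le_conjugate (rpow_le_rpow hr' hsxs)
    _ = conjSqrt x (s ^ (1 + r)) := by
        nth_rw 1 3 [← rpow_one s hs.nonneg]
        rw [← rpow_add hs.isUnit, ← rpow_add hs.isUnit]
        congr 2
        ring

-- With `s := (x^{-1/2} y x^{-1/2})^{1/2}` the mean is `x^{1/2} s x^{1/2}`, and `y` is
-- `x^{1/2} s² x^{1/2}`. If the mean is `≤ 1` then `x ≤ s⁻¹`, so that `x^r` and `y^r` are dominated
-- by `x^{1/2} s^{1-r} x^{1/2}` and `x^{1/2} s^{1+r} x^{1/2}`, whose mean is again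
-- `x^{1/2} s x^{1/2}`.
lemma sharp_rpow_le_one (hx : IsStrictlyPositive x) (hy : IsStrictlyPositive y)
    (h : sharp x y ≤ 1) {r : ℝ} (hr : r ∈ Set.Icc 1 2) : sharp (x ^ r) (y ^ r) ≤ 1 := by
  have hm := (isStrictlyPositive_conjSqrt_iff x⁻¹ʳ y hx.ringInverse).2 hy
  obtain ⟨s, hs, hs_def⟩ : ∃ s, IsStrictlyPositive s ∧ s = sqrt (conjSqrt x⁻¹ʳ y) :=
    ⟨_, by cfc_tac, rfl⟩
  have hy_eq : conjSqrt x (s * s) = y := by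
    rw [hs_def, sqrt_mul_sqrt_self _ hm.nonneg, conjSqrt_conjSqrt_ringInverse x y]
  have hg_eq : sharp x y = conjSqrt x s := by rw [sharp, hs_def]
  have hxs : x ≤ s⁻¹ʳ := by
    have hsx : s ≤ x⁻¹ʳ := by
      simpa only [hg_eq, conjSqrt_ringInverse_conjSqrt x s, conjSqrt_one _ hx.ringInverse.nonneg]
        using conjSqrt_monotone (c := x⁻¹ʳ) h
    simpa only [inverse_inverse hx.isUnit] using CStarAlgebra.ringInverse_le_ringInverse hsx hs
  have hu : IsStrictlyPositive (sqrt x) := by cfc_tac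
  calc sharp (x ^ r) (y ^ r)
      ≤ sharp (conjSqrt x (s ^ (1 - r))) (conjSqrt x (s ^ (1 + r))) :=
        sharp_mono (.rpow x r hx) (.rpow y r hy) (rpow_le_conjSqrt_rpow hx hs hxs hr)
          (hy_eq ▸ conjSqrt_mul_self_rpow_le hx hs hxs hr)
    _ = conjSqrt x (sharp (s ^ (1 - r)) (s ^ (1 + r))) := by
        simpa only [conjSqrt_apply, hu.isSelfAdjoint.star_eq] using
          sharp_conj hu.isUnit (.rpow s (1 - r) hs) (.rpow s (1 + r) hs)
    _ = sharp x y := by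
        rw [sharp_rpow_rpow hs, show (1 - r + (1 + r)) / 2 = 1 by ring, rpow_one s hs.nonneg, hg_eq]
    _ ≤ 1 := h

lemma sharp_rpow_le {c : ℝ} (hc : 0 < c) (hx : IsStrictlyPositive x) (hy : IsStrictlyPositive y)
    (h : sharp x y ≤ c • 1) {r : ℝ} (hr : r ∈ Set.Icc 1 2) :
    sharp (x ^ r) (y ^ r) ≤ c ^ r • 1 := by
  have hinv : 0 < c⁻¹ := inv_pos.2 hc
  have h1 : sharp (c⁻¹ • x) (c⁻¹ • y) ≤ 1 := by
    rw [sharp_smul hinv hx hy]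
    simpa [smul_smul, hc.ne'] using smul_le_smul_of_nonneg_left h hinv.le
  have h2 := sharp_rpow_le_one (hx.smul hinv) (hy.smul hinv) h1 hr
  rw [smul_rpow hx hinv, smul_rpow hy hinv,
    sharp_smul (Real.rpow_pos_of_pos hinv r) (.rpow x r hx) (.rpow y r hy)] at h2
  simpa [smul_smul, ← Real.mul_rpow hc.le hinv.le, hc.ne'] using
    smul_le_smul_of_nonneg_left h2 (Real.rpow_nonneg hc.le r)

end CStarAlgebra

section LogMajorization

variable {d : ℕ}

/-- The product of the first `k` entries of a `d`-tuple, of all entries if `d ≤ k`. -/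
def headProd (x : Fin d → ℝ) (k : ℕ) : ℝ := ∏ j : Fin d with j.val < k, x j

/-- Weak log-majorization of `x` by an antitone tuple `y` of nonnegative reals. The partial products
of the decreasing rearrangement of `x` are replaced by the products of `x` over all index sets, of
which they are the largest, so that `x` need not be sorted. -/
def IsWeakLogMaj (x y : Fin d → ℝ) : Prop :=
  ∀ S : Finset (Fin d), ∏ i ∈ S, x i ≤ headProd y #S

lemma headProd_card (x : Fin d → ℝ) : headProd x (Fintype.card (Fin d)) = ∏ i, x i := by
  simp [headProd]

@[simp] lemma headProd_zero (x : Fin d → ℝ) : headProd x 0 = 1 := by simp [headProd]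

lemma headProd_succ (x : Fin d → ℝ) (i : Fin d) :
    headProd x (i + 1) = x i * headProd x i := by
  have : ({j | j.val < i + 1} : Finset (Fin d)) = insert i ({j | j.val < i} : Finset (Fin d)) := by
    ext j
    simp [Fin.ext_iff, Nat.le_iff_lt_or_eq, or_comm]
  rw [headProd, this, prod_insert (by simp), headProd]

lemma headProd_mul (x y : Fin d → ℝ) (k : ℕ) :
    headProd (fun i => x i * y i) k = headProd x k * headProd y k :=
  prod_mul_distrib

lemma headProd_nonneg {x : Fin d → ℝ} (hx : ∀ i, 0 ≤ x i) (k : ℕ) : 0 ≤ headProd x k :=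
  prod_nonneg fun i _ => hx i

lemma pow_le_headProd {x : Fin d → ℝ} (hx : Antitone x) (hx0 : ∀ i, 0 ≤ x i) (i : Fin d) :
    x i ^ (i : ℕ) ≤ headProd x i := by
  calc x i ^ (i : ℕ) = ∏ _j ∈ ({j | j.val < i} : Finset (Fin d)), x i := by
        rw [prod_const, Fin.card_filter_val_lt, min_eq_right i.2.le]
    _ ≤ headProd x i := prod_le_prod (fun _ _ => hx0 i) fun j hj =>
        hx (Fin.le_def.2 (mem_filter.1 hj).2.le)

lemma isWeakLogMaj_self {x : Fin d → ℝ} (hx : Antitone x) (hx0 : ∀ i, 0 ≤ x i) :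
    IsWeakLogMaj x x := by
  intro S
  induction S using Finset.induction_on_max with
  | empty => simp [headProd]
  | insert m S hm ih =>
    have hcard : #S ≤ m := by
      simpa using card_le_card (fun i hi => mem_Iio.2 (hm i hi) : S ⊆ Iio m)
    rw [prod_insert fun h => (hm m h).false, card_insert_of_notMem fun h => (hm m h).false]
    calc x m * ∏ i ∈ S, x i ≤ x ⟨#S, hcard.trans_lt m.2⟩ * headProd x #S :=
          mul_le_mul (hx hcard) ih (prod_nonneg fun i _ => hx0 i) (hx0 _)
      _ = headProd x (#S + 1) := (headProd_succ x ⟨#S, hcard.trans_lt m.2⟩).symm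

namespace IsWeakLogMaj

variable {x y z : Fin d → ℝ}

lemma headProd_le (h : IsWeakLogMaj x y) (k : ℕ) : headProd x k ≤ headProd y k := by
  have := h {j | j.val < k}
  simpa [Fin.card_filter_val_lt, headProd] using this

lemma trans (hxy : IsWeakLogMaj x y) (hyz : IsWeakLogMaj y z) : IsWeakLogMaj x z :=
  fun S => (hxy S).trans (hyz.headProd_le _)

lemma prod_le (h : IsWeakLogMaj x y) : ∏ i, x i ≤ ∏ i, y i :=
  (h univ).trans_eq (headProd_card y)

lemma rpow (h : IsWeakLogMaj x y) (hx : ∀ i, 0 ≤ x i) (hy : ∀ i, 0 ≤ y i) {t : ℝ} (ht : 0 ≤ t) :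
    IsWeakLogMaj (fun i => x i ^ t) (fun i => y i ^ t) := by
  intro S
  rw [headProd, Real.finsetProd_rpow _ _ fun i _ => hx i, Real.finsetProd_rpow _ _ fun i _ => hy i]
  exact Real.rpow_le_rpow (prod_nonneg fun i _ => hx i) (h S) ht

lemma of_tendsto {ι : Type*} {l : Filter ι} [l.NeBot] {f g : ι → Fin d → ℝ}
    (hf : ∀ i, Tendsto (f · i) l (𝓝 (x i))) (hg : ∀ i, Tendsto (g · i) l (𝓝 (y i)))
    (h : ∀ᶠ p in l, IsWeakLogMaj (f p) (g p)) : IsWeakLogMaj x y := fun S =>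
  le_of_tendsto_of_tendsto (tendsto_finsetProd _ fun i _ => hf i)
    (tendsto_finsetProd _ fun i _ => hg i) (h.mono fun _ hp => hp S)

lemma le_head (h : IsWeakLogMaj x y) (hd : 0 < d) (i : Fin d) : x i ≤ y ⟨0, hd⟩ := by
  calc x i = ∏ j ∈ {i}, x j := (prod_singleton _ _).symm
    _ ≤ headProd y (0 + 1) := h {i}
    _ = y ⟨0, hd⟩ := by rw [headProd_succ y ⟨0, hd⟩, headProd_zero, mul_one]

lemma last_le (h : IsWeakLogMaj x y) (hprod : ∏ i, x i = ∏ i, y i) (hx : ∀ i, 0 ≤ x i)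
    (hy : Antitone y) (hd : 0 < d) (i : Fin d) : y ⟨d - 1, Nat.sub_lt hd one_pos⟩ ≤ x i := by
  set m : Fin d := ⟨d - 1, Nat.sub_lt hd one_pos⟩
  by_contra! hlt
  have hy_pos (j : Fin d) : 0 < y j :=
    ((hx i).trans_lt hlt).trans_le (hy (Fin.le_def.2 (Nat.le_sub_one_of_lt j.2)))
  have hle : ∏ j ∈ univ.erase i, x j ≤ headProd y m := by
    simpa using h (univ.erase i)
  have := calc
    ∏ j, x j = x i * ∏ j ∈ univ.erase i, x j := (mul_prod_erase _ _ (mem_univ i)).symm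
    _ ≤ x i * headProd y m := mul_le_mul_of_nonneg_left hle (hx i)
    _ < y m * headProd y m := mul_lt_mul_of_pos_right hlt (prod_pos fun j _ => hy_pos j)
    _ = headProd y (m + 1) := (headProd_succ y m).symm
    _ = ∏ j, y j := by
      rw [show m + 1 = Fintype.card (Fin d) by
        simpa [m] using Nat.sub_add_cancel hd, headProd_card]
  exact this.ne hprod

end IsWeakLogMaj

lemma exists_perm_sortDesc_eq (x : Fin d → ℝ) : ∃ σ : Equiv.Perm (Fin d), sortDesc x = x ∘ σ :=
  ⟨Fin.revPerm.trans (Tuple.sort x), rfl⟩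

lemma sortDesc_antitone (x : Fin d → ℝ) : Antitone (sortDesc x) := fun _ _ hij =>
  Tuple.monotone_sort x (Fin.rev_le_rev.2 hij)

lemma sortDesc_congr {x y : Fin d → ℝ} (h : univ.val.map x = univ.val.map y) :
    sortDesc x = sortDesc y := by
  obtain ⟨σ, hσ⟩ := exists_perm_sortDesc_eq x
  obtain ⟨τ, hτ⟩ := exists_perm_sortDesc_eq y
  rw [Fin.univ_val_map, Fin.univ_val_map, Multiset.coe_eq_coe] at h
  refine List.ofFn_injective (List.Perm.eq_of_pairwise'
    (sortDesc_antitone x).sortedGE_ofFn.pairwise (sortDesc_antitone y).sortedGE_ofFn.pairwise ?_)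
  rw [hσ, hτ]
  exact ((σ.ofFn_comp_perm x).trans h).trans (τ.ofFn_comp_perm y).symm

lemma sortDesc_of_antitone {x : Fin d → ℝ} (hx : Antitone x) : sortDesc x = x := by
  have hrev : Monotone (x ∘ Fin.revPerm) := fun _ _ hij => hx (Fin.rev_le_rev.2 hij)
  ext i
  have := congrFun (Tuple.unique_monotone (Tuple.monotone_sort x) hrev) i.rev
  simpa [sortDesc] using this

lemma headProd_eq_prod_Iic (x : Fin d → ℝ) (k : Fin d) : headProd x (k + 1) = ∏ i ∈ Iic k, x i :=
  prod_congr (Finset.ext fun j => by simp) fun _ _ => rfl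

lemma IsWeakLogMaj.isLogMaj {x y : Fin d → ℝ} (h : IsWeakLogMaj x y) (hy : Antitone y)
    (hprod : ∏ i, x i = ∏ i, y i) : IsLogMaj x y := by
  refine ⟨fun k => ?_, hprod⟩
  obtain ⟨σ, hσ⟩ := exists_perm_sortDesc_eq x
  calc ∏ i ∈ Iic k, sortDesc x i = ∏ i ∈ (Iic k).map σ.toEmbedding, x i := by simp [hσ]
    _ ≤ headProd y #((Iic k).map σ.toEmbedding) := h _
    _ = ∏ i ∈ Iic k, sortDesc y i := by
      rw [card_map, Fin.card_Iic, headProd_eq_prod_Iic, sortDesc_of_antitone hy]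

section Convergence

variable {ι : Type*} [Preorder ι] {f : ι → Fin d → ℝ}

lemma exists_tendsto_headProd [IsDirectedOrder ι] [Nonempty ι] (h0 : ∀ p i, 0 ≤ f p i)
    (hf : ∀ p q, p ≤ q → IsWeakLogMaj (f q) (f p)) (k : ℕ) :
    ∃ c, Tendsto (fun p => headProd (f p) k) atTop (𝓝 c) ∧ ∀ p, c ≤ headProd (f p) k := by
  have hanti : Antitone fun p => headProd (f p) k := fun p q hpq => (hf p q hpq).headProd_le k
  have hbdd : BddBelow (Set.range fun p => headProd (f p) k) :=
    ⟨0, Set.forall_mem_range.2 fun p => headProd_nonneg (h0 p) k⟩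
  exact ⟨_, tendsto_atTop_ciInf hanti hbdd, fun p => ciInf_le hbdd p⟩

-- The limit is the quotient of two consecutive limits of partial products, unless the lower one
-- vanishes; then the entries tend to zero, since their powers are bounded by the partial products.
lemma exists_tendsto_of_isWeakLogMaj [IsDirectedOrder ι] [Nonempty ι]
    (hanti : ∀ p, Antitone (f p)) (h0 : ∀ p i, 0 ≤ f p i)
    (hf : ∀ p q, p ≤ q → IsWeakLogMaj (f q) (f p)) (i : Fin d) :
    ∃ c, Tendsto (fun p => f p i) atTop (𝓝 c) := by
  obtain ⟨c, hc, hc_le⟩ := exists_tendsto_headProd h0 hf i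
  obtain ⟨c', hc', -⟩ := exists_tendsto_headProd h0 hf (i + 1)
  have hc0 : 0 ≤ c := ge_of_tendsto' hc fun p => headProd_nonneg (h0 p) i
  rcases hc0.eq_or_lt with rfl | hpos
  · have hi : (i : ℕ) ≠ 0 := fun hi => by
      simp [hi] at hc
    have hpow : Tendsto (fun p => f p i ^ (i : ℕ)) atTop (𝓝 0) :=
      squeeze_zero (fun p => pow_nonneg (h0 p i) _)
        (fun p => pow_le_headProd (hanti p) (h0 p) i) hc
    have hroot := hpow.rpow_const (p := ((i : ℕ) : ℝ)⁻¹) (.inr (by positivity))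
    exact ⟨_, hroot.congr fun p => Real.pow_rpow_inv_natCast (h0 p i) hi⟩
  · refine ⟨c' / c, (hc'.div hc hpos.ne').congr fun p => ?_⟩
    rw [Pi.div_apply, headProd_succ, mul_div_cancel_right₀ _ (hpos.trans_le (hc_le p)).ne']

end Convergence

end LogMajorization

section Eigenvalues

open scoped MatrixOrder Matrix.Norms.L2Operator

section DiagConj

variable {n : Type*} [Fintype n] [DecidableEq n]

/-- The Hermitian matrix `V diag(e) V⋆` with prescribed eigenvectors and eigenvalues. -/
noncomputable def diagConj (V : unitaryGroup n ℂ) (e : n → ℝ) : Matrix n n ℂ :=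
  Unitary.conjStarAlgAut ℂ _ V (diagonal fun i => (e i : ℂ))

lemma isHermitian_diagConj (V : unitaryGroup n ℂ) (e : n → ℝ) : (diagConj V e).IsHermitian := by
  have h : IsSelfAdjoint (diagonal fun i => (e i : ℂ)) :=
    isHermitian_diagonal_of_self_adjoint _ (by ext; simp)
  exact h.map _

lemma charpoly_diagConj (V : unitaryGroup n ℂ) (e : n → ℝ) :
    (diagConj V e).charpoly = ∏ i, (Polynomial.X - Polynomial.C (e i : ℂ)) := by
  rw [diagConj, Unitary.conjStarAlgAut_apply, charpoly_mul_comm, ← mul_assoc]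
  simp [charpoly_diagonal]

lemma diagConj_smul_one (V : unitaryGroup n ℂ) (c : ℝ) : diagConj V (fun _ => c) = c • 1 := by
  have : (diagonal fun _ => (c : ℂ)) = (c : ℂ) • (1 : Matrix n n ℂ) := by
    rw [smul_one_eq_diagonal]
  rw [diagConj, this, map_smul, map_one, Complex.coe_smul]

lemma star_dotProduct_diagConj_mulVec (V : unitaryGroup n ℂ) (e : n → ℝ) (x : n → ℂ) :
    star x ⬝ᵥ (diagConj V e *ᵥ x) =
      ((∑ j, e j * ‖(star (V : Matrix n n ℂ) *ᵥ x) j‖ ^ 2 : ℝ) : ℂ) := by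
  have h : star x ᵥ* (V : Matrix n n ℂ) = star (star (V : Matrix n n ℂ) *ᵥ x) := by
    rw [star_mulVec, star_eq_conjTranspose, conjTranspose_conjTranspose]
  rw [diagConj, Unitary.conjStarAlgAut_apply, ← mulVec_mulVec, ← mulVec_mulVec, dotProduct_mulVec,
    h, dotProduct]
  push_cast
  refine sum_congr rfl fun j _ => ?_
  rw [mulVec_diagonal, Pi.star_apply, ← Complex.conj_mul']
  simp only [RCLike.star_def]
  ring

lemma sum_norm_sq_star_mulVec (V : unitaryGroup n ℂ) (x : n → ℂ) :
    ∑ j, ‖(star (V : Matrix n n ℂ) *ᵥ x) j‖ ^ 2 = ∑ j, ‖x j‖ ^ 2 := by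
  have h := star_dotProduct_diagConj_mulVec V (fun _ => 1) x
  rw [diagConj_smul_one V, ← diagConj_smul_one 1, star_dotProduct_diagConj_mulVec] at h
  simpa using (Complex.ofReal_injective h).symm

lemma diagConj_le_smul_one_iff (V : unitaryGroup n ℂ) (e : n → ℝ) (c : ℝ) :
    diagConj V e ≤ c • 1 ↔ ∀ i, e i ≤ c := by
  rw [← diagConj_smul_one V, diagConj, diagConj, OrderIsoClass.map_le_map_iff, le_iff, diagonal_sub,
    posSemidef_diagonal_iff]
  simp [sub_nonneg]

lemma exists_diagConj_perm (V : unitaryGroup n ℂ) (e : n → ℝ) (σ : Equiv.Perm n) :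
    ∃ W : unitaryGroup n ℂ, diagConj V e = diagConj W (e ∘ σ) := by
  refine ⟨⟨(V : Matrix n n ℂ).submatrix id σ, ?_⟩, ?_⟩
  · rw [mem_unitaryGroup_iff, star_eq_conjTranspose, conjTranspose_submatrix, submatrix_mul_equiv,
      ← star_eq_conjTranspose, mem_unitaryGroup_iff.1 V.2, submatrix_id_id]
  · have : (diagonal fun i => ((e ∘ σ) i : ℂ)) = (diagonal fun i => (e i : ℂ)).submatrix σ σ := by
      rw [submatrix_diagonal_equiv]
      rfl
    simp only [diagConj, Unitary.conjStarAlgAut_apply, this, star_eq_conjTranspose,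
      conjTranspose_submatrix, submatrix_mul_equiv, submatrix_id_id]

lemma diagConj_nonneg (V : unitaryGroup n ℂ) {e : n → ℝ} (he : ∀ i, 0 ≤ e i) :
    0 ≤ diagConj V e := by
  have h : 0 ≤ diagonal fun i => (e i : ℂ) := by
    rw [nonneg_iff_posSemidef, posSemidef_diagonal_iff]
    simpa using he
  exact map_nonneg _ h

lemma conjStarAlgAut_eq_conjStarAlgAut_iff (U V : unitaryGroup n ℂ) (a b : Matrix n n ℂ) :
    Unitary.conjStarAlgAut ℂ _ U a = Unitary.conjStarAlgAut ℂ _ V b ↔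
      a * (star U * V : unitaryGroup n ℂ) = (star U * V : unitaryGroup n ℂ) * b := by
  rw [← (EquivLike.injective (Unitary.conjStarAlgAut ℂ (Matrix n n ℂ) (star U))).eq_iff,
    ← Unitary.conjStarAlgAut_mul_apply, ← Unitary.conjStarAlgAut_mul_apply, Unitary.star_mul_self,
    map_one, StarAlgEquiv.one_apply, Unitary.conjStarAlgAut_apply]
  generalize star U * V = W
  constructor <;> intro h
  · rw [h, mul_assoc, Unitary.coe_star_mul_self, mul_one]
  · rw [← h, mul_assoc, Unitary.mul_star_self_of_mem W.2, mul_one]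

-- The transition matrix `W = U⋆ V` between two diagonalizations of the same matrix satisfies
-- `u i * W i j = W i j * v j`; so `W i j = 0` unless `u i = v j`.
lemma diagConj_comp_eq {U V : unitaryGroup n ℂ} {u v : n → ℝ} (h : diagConj U u = diagConj V v)
    (f : ℝ → ℝ) : diagConj U (f ∘ u) = diagConj V (f ∘ v) := by
  rw [diagConj, diagConj, conjStarAlgAut_eq_conjStarAlgAut_iff] at h ⊢
  ext i j
  have hij := congrFun (congrFun h i) j
  simp only [diagonal_mul, mul_diagonal, Function.comp_apply] at hij ⊢
  rcases eq_or_ne ((star U * V : unitaryGroup n ℂ).1 i j) 0 with h0 | h0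
  · simp [h0]
  · rw [mul_comm] at hij ⊢
    rw [Complex.ofReal_injective (mul_left_cancel₀ h0 hij)]

lemma cfc_diagConj (V : unitaryGroup n ℂ) (e : n → ℝ) (f : ℝ → ℝ) :
    cfc f (diagConj V e) = diagConj V (f ∘ e) := by
  have h := isHermitian_diagConj V e
  rw [h.cfc_eq]
  exact (diagConj_comp_eq h.spectral_theorem f).symm

lemma diagConj_rpow (V : unitaryGroup n ℂ) {e : n → ℝ} (he : ∀ i, 0 ≤ e i) (r : ℝ) :
    diagConj V e ^ r = diagConj V fun i => e i ^ r := by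
  rw [CFC.rpow_eq_cfc_real (diagConj_nonneg V he), cfc_diagConj]
  rfl

end DiagConj

variable {d : ℕ} {M N : Matrix (Fin d) (Fin d) ℂ}

/-! ### Weyl monotonicity -/

lemma exists_ne_zero_forall_lt_mulVec_eq_zero {n K : Type*} [Fintype n] [LinearOrder n] [Field K]
    (S T : Matrix n n K) (i : n) :
    ∃ v ≠ 0, (∀ j < i, (S *ᵥ v) j = 0) ∧ ∀ j > i, (T *ᵥ v) j = 0 := by
  let C : Matrix n n K := of fun j => if j < i then S j else if i < j then T j else 0
  have hC : C.det = 0 := det_eq_zero_of_row_eq_zero i fun j => by simp [C]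
  obtain ⟨v, hv0, hv⟩ := exists_mulVec_eq_zero_iff.2 hC
  refine ⟨v, hv0, fun j hj => ?_, fun j hj => ?_⟩
  · simpa [C, mulVec, hj] using congrFun hv j
  · simpa [C, mulVec, hj, hj.le.not_gt] using congrFun hv j

-- The eigenvectors for the `i + 1` largest `x`-values and those for the `d - i` smallest `y`-values
-- span subspaces that meet nontrivially; compare the quadratic forms there.
lemma le_of_diagConj_le {V W : unitaryGroup (Fin d) ℂ} {x y : Fin d → ℝ} (hx : Antitone x)
    (hy : Antitone y) (h : diagConj V x ≤ diagConj W y) (i : Fin d) : x i ≤ y i := by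
  obtain ⟨v, hv0, hvW, hvV⟩ := exists_ne_zero_forall_lt_mulVec_eq_zero
    (star (W : Matrix (Fin d) (Fin d) ℂ)) (star (V : Matrix (Fin d) (Fin d) ℂ)) i
  have hpos : 0 < ∑ j, ‖v j‖ ^ 2 := by
    obtain ⟨j, hj⟩ := Function.ne_iff.1 hv0
    exact sum_pos' (fun _ _ => by positivity) ⟨j, mem_univ _, pow_pos (norm_pos_iff.2 hj) 2⟩
  have hquad : ∑ j, x j * ‖(star (V : Matrix (Fin d) (Fin d) ℂ) *ᵥ v) j‖ ^ 2 ≤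
      ∑ j, y j * ‖(star (W : Matrix (Fin d) (Fin d) ℂ) *ᵥ v) j‖ ^ 2 := by
    have := (le_iff.1 h).dotProduct_mulVec_nonneg v
    rw [sub_mulVec, dotProduct_sub, sub_nonneg, star_dotProduct_diagConj_mulVec,
      star_dotProduct_diagConj_mulVec] at this
    exact Complex.real_le_real.1 this
  refine le_of_mul_le_mul_right ?_ hpos
  calc x i * ∑ j, ‖v j‖ ^ 2
      = ∑ j, x i * ‖(star (V : Matrix (Fin d) (Fin d) ℂ) *ᵥ v) j‖ ^ 2 := by
        rw [← sum_norm_sq_star_mulVec V, mul_sum]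
    _ ≤ ∑ j, x j * ‖(star (V : Matrix (Fin d) (Fin d) ℂ) *ᵥ v) j‖ ^ 2 := by
        refine sum_le_sum fun j _ => ?_
        rcases le_or_gt j i with hj | hj
        · exact mul_le_mul_of_nonneg_right (hx hj) (by positivity)
        · simp [hvV j hj]
    _ ≤ ∑ j, y j * ‖(star (W : Matrix (Fin d) (Fin d) ℂ) *ᵥ v) j‖ ^ 2 := hquad
    _ ≤ ∑ j, y i * ‖(star (W : Matrix (Fin d) (Fin d) ℂ) *ᵥ v) j‖ ^ 2 := by
        refine sum_le_sum fun j _ => ?_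
        rcases lt_or_ge j i with hj | hj
        · simp [hvW j hj]
        · exact mul_le_mul_of_nonneg_right (hy hj) (by positivity)
    _ = y i * ∑ j, ‖v j‖ ^ 2 := by rw [← mul_sum, sum_norm_sq_star_mulVec]

lemma eigsDesc_eq_sortDesc (hM : M.IsHermitian) : eigsDesc M = sortDesc hM.eigenvalues := by
  rw [eigsDesc, dif_pos hM]
  rfl

lemma eigsDesc_antitone (M : Matrix (Fin d) (Fin d) ℂ) : Antitone (eigsDesc M) := by
  by_cases hM : M.IsHermitian
  · exact eigsDesc_eq_sortDesc hM ▸ sortDesc_antitone _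
  · rw [eigsDesc, dif_neg hM]
    exact antitone_const

lemma exists_eq_diagConj_eigsDesc (hM : M.IsHermitian) : ∃ V, M = diagConj V (eigsDesc M) := by
  obtain ⟨σ, hσ⟩ := exists_perm_sortDesc_eq hM.eigenvalues
  obtain ⟨V, hV⟩ := exists_diagConj_perm hM.eigenvectorUnitary hM.eigenvalues σ
  exact ⟨V, by rw [eigsDesc_eq_sortDesc hM, hσ, ← hV]; exact hM.spectral_theorem⟩

lemma eigsDesc_eq_of_charpoly_eq (hM : M.IsHermitian) {e : Fin d → ℝ} (he : Antitone e)
    (h : M.charpoly = ∏ i, (Polynomial.X - Polynomial.C (e i : ℂ))) : eigsDesc M = e := by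
  have hsort : sortDesc hM.eigenvalues = sortDesc e := by
    refine sortDesc_congr (Multiset.map_injective Complex.ofReal_injective ?_)
    have hroots := hM.roots_charpoly_eq_eigenvalues
    rw [h, Polynomial.roots_prod _ _ (prod_ne_zero_iff.2 fun _ _ => Polynomial.X_sub_C_ne_zero _)]
      at hroots
    simpa [Function.comp_def] using hroots.symm
  rw [eigsDesc_eq_sortDesc hM, hsort, sortDesc_of_antitone he]

lemma eigsDesc_congr (hM : M.IsHermitian) (hN : N.IsHermitian) (h : M.charpoly = N.charpoly) :
    eigsDesc M = eigsDesc N := by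
  rw [eigsDesc_eq_sortDesc hM, eigsDesc_eq_sortDesc hN, (hM.eigenvalues_eq_eigenvalues_iff hN).2 h]

lemma eigsDesc_mul_conjTranspose_comm (T : Matrix (Fin d) (Fin d) ℂ) :
    eigsDesc (T * Tᴴ) = eigsDesc (Tᴴ * T) :=
  eigsDesc_congr (isHermitian_mul_conjTranspose_self T) (isHermitian_conjTranspose_mul_self T)
    (charpoly_mul_comm T Tᴴ)

lemma eigsDesc_diagConj (V : unitaryGroup (Fin d) ℂ) {e : Fin d → ℝ} (he : Antitone e) :
    eigsDesc (diagConj V e) = e :=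
  eigsDesc_eq_of_charpoly_eq (isHermitian_diagConj V e) he (charpoly_diagConj V e)

lemma charpoly_cfc_eq_prod_eigsDesc (hM : M.IsHermitian) (f : ℝ → ℝ) :
    (cfc f M).charpoly = ∏ i, (Polynomial.X - Polynomial.C (f (eigsDesc M i) : ℂ)) := by
  obtain ⟨σ, hσ⟩ := exists_perm_sortDesc_eq hM.eigenvalues
  rw [hM.charpoly_cfc_eq, eigsDesc_eq_sortDesc hM, hσ]
  exact (Equiv.prod_comp σ _).symm

lemma eigsDesc_cfc (hM : M.IsHermitian) {f : ℝ → ℝ} (hf : Antitone fun i => f (eigsDesc M i)) :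
    eigsDesc (cfc f M) = fun i => f (eigsDesc M i) :=
  eigsDesc_eq_of_charpoly_eq (cfc_predicate f M) hf (charpoly_cfc_eq_prod_eigsDesc hM f)

lemma eigsDesc_cfc_rev (hM : M.IsHermitian) {f : ℝ → ℝ}
    (hf : Monotone fun i => f (eigsDesc M i)) :
    eigsDesc (cfc f M) = fun i => f (eigsDesc M i.rev) := by
  refine eigsDesc_eq_of_charpoly_eq (cfc_predicate f M)
    (fun i j hij => hf (Fin.rev_le_rev.2 hij)) ?_
  rw [charpoly_cfc_eq_prod_eigsDesc hM]
  exact (Equiv.prod_comp Fin.revPerm _).symm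

lemma det_eq_prod_eigsDesc (hM : M.IsHermitian) : M.det = ((∏ i, eigsDesc M i : ℝ) : ℂ) := by
  obtain ⟨σ, hσ⟩ := exists_perm_sortDesc_eq hM.eigenvalues
  rw [hM.det_eq_prod_eigenvalues, eigsDesc_eq_sortDesc hM, hσ]
  push_cast
  exact (Equiv.prod_comp σ _).symm

lemma eigsDesc_nonneg (hM : 0 ≤ M) (i : Fin d) : 0 ≤ eigsDesc M i := by
  have h := nonneg_iff_posSemidef.1 hM
  exact eigsDesc_eq_sortDesc h.isHermitian ▸ h.eigenvalues_nonneg _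

lemma eigsDesc_pos (hM : IsStrictlyPositive M) (i : Fin d) : 0 < eigsDesc M i := by
  have h := isStrictlyPositive_iff_posDef.1 hM
  exact eigsDesc_eq_sortDesc h.isHermitian ▸ h.eigenvalues_pos _

lemma eigsDesc_mono (hM : M.IsHermitian) (hN : N.IsHermitian) (h : M ≤ N) :
    eigsDesc M ≤ eigsDesc N := by
  obtain ⟨V, hV⟩ := exists_eq_diagConj_eigsDesc hM
  obtain ⟨W, hW⟩ := exists_eq_diagConj_eigsDesc hN
  exact le_of_diagConj_le (eigsDesc_antitone _) (eigsDesc_antitone _) (hV ▸ hW ▸ h)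

lemma eigsDesc_add_smul_one (hM : M.IsHermitian) (c : ℝ) :
    eigsDesc (M + c • 1) = fun i => eigsDesc M i + c := by
  have h : cfc (· + c) M = M + c • 1 := by
    have hs : IsSelfAdjoint M := hM
    rw [cfc_add_const c _ M, cfc_id' ℝ M, Algebra.algebraMap_eq_smul_one]
  rw [← h, eigsDesc_cfc hM fun i j hij => by simpa using eigsDesc_antitone M hij]

lemma eigsDesc_rpow (hM : 0 ≤ M) {r : ℝ} (hr : 0 ≤ r) :
    eigsDesc (M ^ r) = fun i => eigsDesc M i ^ r := by
  rw [CFC.rpow_eq_cfc_real hM, eigsDesc_cfc hM.isSelfAdjoint fun i j hij =>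
    Real.rpow_le_rpow (eigsDesc_nonneg hM j) (eigsDesc_antitone M hij) hr]

lemma psdPow_eq_rpow (hM : 0 ≤ M) (r : ℝ) : psdPow M r = M ^ r := by
  have h : M.IsHermitian := hM.isSelfAdjoint
  rw [psdPow, dif_pos h, CFC.rpow_eq_cfc_real hM, h.cfc_eq]
  rfl

/-! ### Continuity of eigenvalues -/

lemma eigsDesc_sub_le (hM : M.IsHermitian) (hN : N.IsHermitian) (i : Fin d) :
    eigsDesc M i - eigsDesc N i ≤ ‖M - N‖ := by
  have hle : M ≤ N + ‖M - N‖ • 1 := by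
    rw [← sub_le_iff_le_add', ← Algebra.algebraMap_eq_smul_one]
    exact IsSelfAdjoint.le_algebraMap_norm_self (hM.sub hN)
  have hN' : (N + ‖M - N‖ • 1).IsHermitian := hN.add (isHermitian_one.smul (.all _))
  have := eigsDesc_mono hM hN' hle i
  rw [eigsDesc_add_smul_one hN] at this
  linarith

lemma tendsto_eigsDesc {ι : Type*} {l : Filter ι} {F : ι → Matrix (Fin d) (Fin d) ℂ}
    (hF : ∀ᶠ t in l, (F t).IsHermitian) (hM : M.IsHermitian) (h : Tendsto F l (𝓝 M)) (i : Fin d) :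
    Tendsto (fun t => eigsDesc (F t) i) l (𝓝 (eigsDesc M i)) := by
  rw [tendsto_iff_norm_sub_tendsto_zero] at h ⊢
  refine squeeze_zero' (.of_forall fun _ => norm_nonneg _) (hF.mono fun t ht => ?_) h
  exact abs_sub_le_iff.2 ⟨eigsDesc_sub_le ht hM i, norm_sub_rev M (F t) ▸ eigsDesc_sub_le hM ht i⟩

end Eigenvalues

/-! ### The Gelfand–Naimark inequality -/

section GelfandNaimark

open Ring
open scoped MatrixOrder Matrix.Norms.L2Operator

variable {d : ℕ} {M P X Y Z : Matrix (Fin d) (Fin d) ℂ}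

lemma eigsDesc_pow (hM : 0 ≤ M) (k : ℕ) : eigsDesc (M ^ k) = fun i => eigsDesc M i ^ k := by
  have hs : IsSelfAdjoint M := hM.isSelfAdjoint
  rw [← cfc_pow_id (R := ℝ) M k]
  exact eigsDesc_cfc hs fun i j hij =>
    pow_le_pow_left₀ (eigsDesc_nonneg hM j) (eigsDesc_antitone M hij) k

lemma isStrictlyPositive_pow (hM : IsStrictlyPositive M) (k : ℕ) : IsStrictlyPositive (M ^ k) :=
  CFC.rpow_natCast M k hM.nonneg ▸ IsStrictlyPositive.rpow M k hM

lemma eigsDesc_smul (hM : M.IsHermitian) {c : ℝ} (hc : 0 ≤ c) :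
    eigsDesc (c • M) = fun i => c * eigsDesc M i := by
  have hs : IsSelfAdjoint M := hM
  rw [← cfc_const_mul_id c M, eigsDesc_cfc hM fun i j hij =>
    mul_le_mul_of_nonneg_left (eigsDesc_antitone M hij) hc]

lemma eigsDesc_ringInverse (hM : IsStrictlyPositive M) :
    eigsDesc M⁻¹ʳ = fun i => (eigsDesc M i.rev)⁻¹ := by
  rw [CFC.inverse_eq_rpow_neg_one, CFC.rpow_eq_cfc_real hM.nonneg,
    eigsDesc_cfc_rev hM.nonneg.isSelfAdjoint]
  · simp only [Real.rpow_neg_one]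
  · exact fun i j hij => Real.rpow_le_rpow_of_nonpos (eigsDesc_pos hM j)
      (eigsDesc_antitone M hij) (by norm_num)

lemma prod_eigsDesc_conjSqrt (hX : 0 ≤ X) (hP : 0 ≤ P) :
    ∏ i, eigsDesc (CFC.conjSqrt X P) i = (∏ i, eigsDesc X i) * ∏ i, eigsDesc P i := by
  apply Complex.ofReal_injective
  rw [Complex.ofReal_mul, ← det_eq_prod_eigsDesc (conjSqrt_nonneg X hP).isSelfAdjoint,
    ← det_eq_prod_eigsDesc hX.isSelfAdjoint, ← det_eq_prod_eigsDesc hP.isSelfAdjoint,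
    CFC.conjSqrt_apply, det_mul, det_mul, mul_right_comm, ← det_mul, CFC.sqrt_mul_sqrt_self X hX]

lemma prod_max_eq_headProd_mul_pow {x : Fin d → ℝ} (hx : Antitone x) (S : Finset (Fin d))
    (m : Fin d) (hm : #S = m + 1) : ∏ i, max (x i) (x m) = headProd x #S * x m ^ #Sᶜ := by
  rw [← prod_filter_mul_prod_filter_not univ fun j : Fin d => j.val < #S]
  have hcard : #({j | ¬ j.val < #S} : Finset (Fin d)) = #Sᶜ := by
    have := card_le_univ S
    rw [filter_not, card_univ_sdiff, card_compl, Fin.card_filter_val_lt,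
      min_eq_right (by simpa using this)]
  congr 1
  · refine prod_congr rfl fun j hj => max_eq_left (hx ?_)
    have := (mem_filter.1 hj).2
    exact Fin.le_def.2 (by omega)
  · rw [← hcard, ← prod_const]
    refine prod_congr rfl fun j hj => max_eq_right (hx ?_)
    have := (mem_filter.1 hj).2
    exact Fin.le_def.2 (by omega)

lemma prod_mul_prod_compl_le_prod_eigsDesc (hX : 0 ≤ X) (hZ : 0 ≤ Z) (hXY : X ≤ Y) (hZY : Z ≤ Y)
    (S : Finset (Fin d)) :
    (∏ i ∈ S, eigsDesc X i) * ∏ i ∈ Sᶜ, eigsDesc Z i ≤ ∏ i, eigsDesc Y i := by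
  have hY : 0 ≤ Y := hX.trans hXY
  rw [← prod_mul_prod_compl S (eigsDesc Y)]
  refine mul_le_mul (prod_le_prod (fun i _ => eigsDesc_nonneg hX i) fun i _ => ?_)
    (prod_le_prod (fun i _ => eigsDesc_nonneg hZ i) fun i _ => ?_)
    (prod_nonneg fun i _ => eigsDesc_nonneg hZ i) (prod_nonneg fun i _ => eigsDesc_nonneg hY i)
  · exact eigsDesc_mono hX.isSelfAdjoint hY.isSelfAdjoint hXY i
  · exact eigsDesc_mono hZ.isSelfAdjoint hY.isSelfAdjoint hZY i

-- Replace `P` by `Q := max P c`, where `c` is the `#S`-th eigenvalue of `P`: this increases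
-- `conjSqrt X P`, keeps it above `c X`, and `det Q = headProd (eigsDesc P) #S * c ^ #Sᶜ`.
lemma prod_eigsDesc_conjSqrt_le (hX : IsStrictlyPositive X) (hP : IsStrictlyPositive P)
    (S : Finset (Fin d)) :
    ∏ i ∈ S, eigsDesc (CFC.conjSqrt X P) i ≤
      (∏ i ∈ S, eigsDesc X i) * headProd (eigsDesc P) #S := by
  rcases S.eq_empty_or_nonempty with rfl | hS
  · simp
  obtain ⟨m, hm⟩ : ∃ m : Fin d, #S = m + 1 := by
    have hcard : #S ≤ d := by simpa using card_le_univ S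
    have hS0 : 0 < #S := hS.card_pos
    exact ⟨⟨#S - 1, by omega⟩, by simp only; omega⟩
  have hs : IsSelfAdjoint P := hP.isSelfAdjoint
  set c := eigsDesc P m
  have hc : 0 < c := eigsDesc_pos hP m
  set Q := cfc (max · c) P with hQ_def
  have hPQ : P ≤ Q := by
    conv_lhs => rw [← cfc_id' ℝ P]
    exact cfc_mono fun x _ => le_max_left x c
  have hcQ : c • X ≤ CFC.conjSqrt X Q := by
    have h : c • 1 ≤ Q := by
      rw [← Algebra.algebraMap_eq_smul_one, ← cfc_const c P]
      exact cfc_mono fun x _ => le_max_right x c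
    simpa [CFC.conjSqrt_one X hX.nonneg] using CFC.conjSqrt_monotone (c := X) h
  have hle := prod_mul_prod_compl_le_prod_eigsDesc (conjSqrt_nonneg X hP.nonneg)
    (smul_nonneg hc.le hX.nonneg) (CFC.conjSqrt_monotone hPQ) hcQ S
  rw [prod_eigsDesc_conjSqrt hX.nonneg (hP.nonneg.trans hPQ), hQ_def,
    eigsDesc_cfc hs fun i j hij => max_le_max_right c (eigsDesc_antitone P hij),
    prod_max_eq_headProd_mul_pow (eigsDesc_antitone P) S m hm,
    eigsDesc_smul hX.isSelfAdjoint hc.le, prod_mul_distrib, prod_const,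
    ← prod_mul_prod_compl S (eigsDesc X)] at hle
  have hpos : 0 < c ^ #Sᶜ * ∏ i ∈ Sᶜ, eigsDesc X i :=
    mul_pos (pow_pos hc _) (prod_pos fun i _ => eigsDesc_pos hX i)
  exact le_of_mul_le_mul_right (hle.trans_eq (by ring)) hpos

lemma eigsDesc_conjSqrt_ringInverse_sharp_sq (hX : IsStrictlyPositive X) (hY : 0 ≤ Y) :
    eigsDesc (CFC.conjSqrt X⁻¹ʳ (sharp X Y ^ 2)) = eigsDesc Y := by
  have hg : (sharp X Y)ᴴ = sharp X Y := (sharp_nonneg X Y).isSelfAdjoint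
  have hs : (CFC.sqrt X⁻¹ʳ)ᴴ = CFC.sqrt X⁻¹ʳ := (CFC.sqrt_nonneg X⁻¹ʳ).isSelfAdjoint
  have h := eigsDesc_mul_conjTranspose_comm (CFC.sqrt X⁻¹ʳ * sharp X Y)
  simp only [conjTranspose_mul, hg, hs] at h
  convert h using 2
  · simp only [CFC.conjSqrt_apply, sq, mul_assoc]
  · rw [mul_assoc, ← mul_assoc (CFC.sqrt X⁻¹ʳ), CFC.sqrt_mul_sqrt_self _ hX.ringInverse.nonneg,
      ← mul_assoc, sharp_mul_ringInverse_mul_sharp hX hY]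

lemma isWeakLogMaj_sharp_sq (hX : IsStrictlyPositive X) (hY : IsStrictlyPositive Y) :
    IsWeakLogMaj (fun i => eigsDesc (sharp X Y) i ^ 2) (fun i => eigsDesc X i * eigsDesc Y i) := by
  intro S
  have hP := (CFC.isStrictlyPositive_conjSqrt_iff X⁻¹ʳ _ hX.ringInverse).2
    (isStrictlyPositive_pow (isStrictlyPositive_sharp hX hY) 2)
  have h := prod_eigsDesc_conjSqrt_le hX hP S
  rw [CFC.conjSqrt_conjSqrt_ringInverse X, eigsDesc_conjSqrt_ringInverse_sharp_sq hX hY.nonneg,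
    eigsDesc_pow (isStrictlyPositive_sharp hX hY).nonneg] at h
  refine h.trans ?_
  rw [headProd_mul]
  exact mul_le_mul_of_nonneg_right
    (isWeakLogMaj_self (eigsDesc_antitone X) (eigsDesc_nonneg hX.nonneg) S)
    (headProd_nonneg (eigsDesc_nonneg hY.nonneg) _)

lemma isWeakLogMaj_mul_rev_sharp_sq (hX : IsStrictlyPositive X) (hY : IsStrictlyPositive Y) :
    IsWeakLogMaj (fun i => eigsDesc X i * eigsDesc Y i.rev)
      (fun i => eigsDesc (sharp X Y) i ^ 2) := by
  intro S
  have h := prod_eigsDesc_conjSqrt_le hY.ringInverse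
    (isStrictlyPositive_pow (isStrictlyPositive_sharp hY hX) 2) S
  rw [eigsDesc_conjSqrt_ringInverse_sharp_sq hY hX.nonneg, eigsDesc_ringInverse hY,
    eigsDesc_pow (isStrictlyPositive_sharp hY hX).nonneg, prod_inv_distrib, ← sharp_comm hX hY] at h
  rwa [prod_mul_distrib, mul_comm, ← le_inv_mul_iff₀ (prod_pos fun i _ => eigsDesc_pos hY _)]

end GelfandNaimark

section StarMonoidHom

open Ring

variable {𝒜 ℬ : Type*} [CStarAlgebra 𝒜] [PartialOrder 𝒜] [StarOrderedRing 𝒜] [CStarAlgebra ℬ]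
  [PartialOrder ℬ] [StarOrderedRing ℬ] {x y : 𝒜}

lemma map_isStrictlyPositive (φ : 𝒜 →⋆* ℬ) (hx : IsStrictlyPositive x) :
    IsStrictlyPositive (φ x) := by
  obtain ⟨b, hb, rfl⟩ := CStarAlgebra.isStrictlyPositive_iff_eq_mul_star_self.1 hx
  exact CStarAlgebra.isStrictlyPositive_iff_eq_mul_star_self.2
    ⟨φ b, hb.map φ, by rw [map_mul, map_star]⟩

lemma map_sharp (φ : 𝒜 →⋆* ℬ) (hx : IsStrictlyPositive x) (hy : IsStrictlyPositive y) :
    φ (sharp x y) = sharp (φ x) (φ y) := by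
  have hinv : φ x⁻¹ʳ = (φ x)⁻¹ʳ := by
    obtain ⟨u, rfl⟩ := hx.isUnit
    rw [inverse_unit]
    exact (inverse_unit (Units.map (φ : 𝒜 →* ℬ) u)).symm
  refine (sharp_eq_of_mul_ringInverse_mul (map_isStrictlyPositive φ hx)
    (map_isStrictlyPositive φ (isStrictlyPositive_sharp hx hy)).nonneg ?_).symm
  rw [← hinv, ← map_mul, ← map_mul, sharp_mul_ringInverse_mul_sharp hx hy.nonneg]

end StarMonoidHom

section Compound

open scoped MatrixOrder Matrix.Norms.L2Operator
open Set (powersetCard)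

section

variable {n R : Type*} [Fintype n] [LinearOrder n] [CommRing R] (k : ℕ)

/-- The `k`-th compound matrix, indexed by `k`-element subsets: the matrix of the `k`-th exterior
power of the linear map defined by `A`. -/
noncomputable def compoundMatrix (A : Matrix n n R) :
    Matrix (powersetCard n k) (powersetCard n k) R :=
  LinearMap.toMatrix ((Pi.basisFun R n).exteriorPower k) ((Pi.basisFun R n).exteriorPower k)
    (exteriorPower.map k (toLin' A))

lemma compoundMatrix_apply (A : Matrix n n R) (s t : powersetCard n k) :
    compoundMatrix k A s t = (A.submatrix (powersetCard.ofFinEmbEquiv.symm s)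
      (powersetCard.ofFinEmbEquiv.symm t)).det := by
  rw [compoundMatrix, LinearMap.toMatrix_apply, exteriorPower.basis_repr_apply,
    exteriorPower.basis_apply, exteriorPower.ιMulti_family, exteriorPower.map_apply_ιMulti,
    exteriorPower.ιMultiDual_apply_ιMulti, ← det_transpose]
  congr 1
  ext i j
  simp

lemma compoundMatrix_diagonal (e : n → R) :
    compoundMatrix k (diagonal e) = diagonal fun s => ∏ i ∈ s.val, e i := by
  ext s t
  rw [compoundMatrix_apply]
  rcases eq_or_ne s t with rfl | hst
  · rw [submatrix_diagonal _ _ (powersetCard.ofFinEmbEquiv.symm s).injective, det_diagonal,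
      diagonal_apply_eq, ← s.val.prod_coe_sort]
    exact (s.val.orderIsoOfFin s.prop).toEquiv.prod_comp fun i : s.val => e i
  · obtain ⟨i, his, hit⟩ := (powersetCard.exists_mem_notMem_iff_ne s t).1 hst
    obtain ⟨j, rfl⟩ := (powersetCard.mem_range_ofFinEmbEquiv_symm_iff_mem s i).2 his
    rw [diagonal_apply_ne _ hst]
    refine det_eq_zero_of_row_eq_zero j fun l => diagonal_apply_ne _ fun h => hit ?_
    exact h ▸ (powersetCard.mem_range_ofFinEmbEquiv_symm_iff_mem t _).1 ⟨l, rfl⟩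

/-- The compound matrix as a homomorphism of ⋆-monoids (the Cauchy–Binet formula). -/
noncomputable def compoundHom [StarRing R] :
    Matrix n n R →⋆* Matrix (powersetCard n k) (powersetCard n k) R where
  toFun := compoundMatrix k
  map_one' := by
    rw [compoundMatrix, toLin'_one, exteriorPower.map_id, LinearMap.toMatrix_id]
  map_mul' A B := by
    simp only [compoundMatrix]
    rw [toLin'_mul, exteriorPower.map_comp,
      LinearMap.toMatrix_comp _ ((Pi.basisFun R n).exteriorPower k)]
  map_star' A := by
    ext s t
    simp only [star_eq_conjTranspose, conjTranspose_apply, compoundMatrix_apply,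
      ← conjTranspose_submatrix, det_conjTranspose]

end

variable {n : Type*} [Fintype n] [LinearOrder n] (k : ℕ)

lemma compoundHom_diagConj (V : unitaryGroup n ℂ) (e : n → ℝ) :
    compoundHom k (diagConj V e) =
      diagConj (Unitary.map (compoundHom k) V) fun s : powersetCard n k => ∏ i ∈ s.val, e i := by
  have h : compoundHom k (diagonal fun i => (e i : ℂ)) =
      diagonal fun s : powersetCard n k => ((∏ i ∈ s.val, e i : ℝ) : ℂ) := by
    push_cast
    exact compoundMatrix_diagonal k _
  simp only [diagConj, Unitary.conjStarAlgAut_apply, map_mul, map_star, h]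
  rfl

variable {d : ℕ} {M X Y : Matrix (Fin d) (Fin d) ℂ}

lemma compoundHom_rpow (hM : 0 ≤ M) (r : ℝ) : compoundHom k (M ^ r) = compoundHom k M ^ r := by
  obtain ⟨V, hV⟩ := exists_eq_diagConj_eigsDesc hM.isSelfAdjoint
  have h0 := eigsDesc_nonneg hM
  rw [hV, diagConj_rpow V h0, compoundHom_diagConj, compoundHom_diagConj,
    diagConj_rpow _ fun s => prod_nonneg fun i _ => h0 i]
  congr 1
  ext s
  exact Real.finsetProd_rpow _ _ (fun i _ => h0 i) r

lemma compoundHom_le_smul_one_iff (hM : M.IsHermitian) (c : ℝ) :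
    compoundHom k M ≤ c • 1 ↔ ∀ S : Finset (Fin d), #S = k → ∏ i ∈ S, eigsDesc M i ≤ c := by
  obtain ⟨V, hV⟩ := exists_eq_diagConj_eigsDesc hM
  conv_lhs => rw [hV, compoundHom_diagConj, diagConj_le_smul_one_iff]
  exact Subtype.forall

-- The largest eigenvalue of the `k`-th compound of a positive matrix is the product of its `k`
-- largest eigenvalues, so `sharp_rpow_le` for compounds bounds these products.
lemma isWeakLogMaj_sharp_rpow (hX : IsStrictlyPositive X) (hY : IsStrictlyPositive Y) {r : ℝ}
    (hr : r ∈ Set.Icc 1 2) :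
    IsWeakLogMaj (eigsDesc (sharp (X ^ r) (Y ^ r))) fun i => eigsDesc (sharp X Y) i ^ r := by
  intro S
  have hXY := isStrictlyPositive_sharp hX hY
  have hXr := hX.rpow X r
  have hYr := hY.rpow Y r
  have hc : 0 < headProd (eigsDesc (sharp X Y)) #S := prod_pos fun i _ => eigsDesc_pos hXY i
  have hle : sharp (compoundHom #S X) (compoundHom #S Y) ≤
      headProd (eigsDesc (sharp X Y)) #S • 1 := by
    rw [← map_sharp _ hX hY, compoundHom_le_smul_one_iff _ hXY.isSelfAdjoint]
    intro T hT
    rw [← hT]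
    exact isWeakLogMaj_self (eigsDesc_antitone _) (fun i => (eigsDesc_pos hXY i).le) T
  have hpow := sharp_rpow_le hc (map_isStrictlyPositive _ hX) (map_isStrictlyPositive _ hY) hle hr
  rw [← compoundHom_rpow _ hX.nonneg, ← compoundHom_rpow _ hY.nonneg, ← map_sharp _ hXr hYr,
    compoundHom_le_smul_one_iff _ (isStrictlyPositive_sharp hXr hYr).isSelfAdjoint] at hpow
  refine (hpow S rfl).trans_eq ?_
  exact (Real.finsetProd_rpow _ _ (fun i _ => (eigsDesc_pos hXY i).le) r).symm

end Compound

section Regularization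

open Ring
open scoped MatrixOrder Matrix.Norms.L2Operator

-- A cluster point `L` at `a` satisfies `L ≤ F t` for all `t > a`, hence lies below every other one.
lemma exists_tendsto_nhdsGT_of_monotoneOn {ι α : Type*} [LinearOrder ι] [TopologicalSpace ι]
    [OrderTopology ι] [TopologicalSpace α] [PartialOrder α] [OrderClosedTopology α] {a : ι}
    [(𝓝[>] a).NeBot] {F : ι → α} {K : Set α} (hK : IsCompact K) (hF : MonotoneOn F (Set.Ioi a))
    (hFK : ∀ᶠ t in 𝓝[>] a, F t ∈ K) : ∃ L, Tendsto F (𝓝[>] a) (𝓝 L) := by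
  have hlower {L : α} (hL : MapClusterPt L (𝓝[>] a) F) {t : ι} (ht : a < t) : L ≤ F t := by
    have hle : ∀ᶠ s in 𝓝[>] a, F s ∈ Set.Iic (F t) := by
      filter_upwards [Ioc_mem_nhdsGT ht] with s hs using hF hs.1 ht hs.2
    exact isClosed_Iic.mem_of_mapClusterPt hL hle
  have hglb {L L' : α} (hL : MapClusterPt L (𝓝[>] a) F) (hL' : MapClusterPt L' (𝓝[>] a) F) :
      L ≤ L' :=
    isClosed_Ici.mem_of_mapClusterPt hL'
      (eventually_mem_nhdsWithin.mono fun t ht => hlower hL ht : ∀ᶠ t in 𝓝[>] a, F t ∈ Set.Ici L)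
  obtain ⟨L, -, hL⟩ := hK.exists_mapClusterPt_of_frequently hFK.frequently
  exact ⟨L, hK.le_nhds_of_unique_clusterPt hFK fun L' _ hL' => (hglb hL' hL).antisymm (hglb hL hL')⟩

variable {d : ℕ} {X Y : Matrix (Fin d) (Fin d) ℂ} {ε : ℝ}

lemma isStrictlyPositive_add_smul_one (hX : 0 ≤ X) (hε : 0 < ε) :
    IsStrictlyPositive (X + ε • (1 : Matrix (Fin d) (Fin d) ℂ)) :=
  .nonneg_add hX (isStrictlyPositive_one.smul hε)

lemma geoMeanPD_eq_sharp (hX : IsStrictlyPositive X) (hY : 0 ≤ Y) :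
    geoMeanPD X Y = sharp X Y := by
  have hsqrt : CFC.sqrt X⁻¹ʳ = X ^ (-(1 / 2) : ℝ) := by
    rw [CFC.sqrt_eq_rpow, CFC.inverse_eq_rpow_neg_one hX, CFC.rpow_rpow X _ _ (by simp) hX]
    norm_num
  rw [geoMeanPD, psdPow_eq_rpow hX.nonneg, psdPow_eq_rpow hX.nonneg, ← hsqrt,
    ← CFC.conjSqrt_apply (a := Y), psdPow_eq_rpow (conjSqrt_nonneg _ hY), ← CFC.sqrt_eq_rpow,
    ← CFC.sqrt_eq_rpow, ← CFC.conjSqrt_apply, sharp]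

lemma tendsto_geoMean (hX : 0 ≤ X) (hY : 0 ≤ Y) :
    Tendsto (fun ε : ℝ => sharp (X + ε • 1) (Y + ε • 1)) (𝓝[>] 0) (𝓝 (geoMean X Y)) := by
  have hpos {Z : Matrix (Fin d) (Fin d) ℂ} (hZ : 0 ≤ Z) {ε : ℝ} (hε : 0 < ε) :=
    isStrictlyPositive_add_smul_one hZ hε
  have hle (Z : Matrix (Fin d) (Fin d) ℂ) {s t : ℝ} (hst : s ≤ t) : Z + s • 1 ≤ Z + t • 1 :=
    add_le_add_right (smul_le_smul_of_nonneg_right hst zero_le_one) Z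
  have hmono : MonotoneOn (fun ε : ℝ => sharp (X + ε • 1) (Y + ε • 1)) (Set.Ioi 0) :=
    fun s hs t _ hst => sharp_mono (hpos hX hs) (hpos hY hs) (hle X hst) (hle Y hst)
  have hbdd : ∀ᶠ ε : ℝ in 𝓝[>] 0, sharp (X + ε • 1) (Y + ε • 1) ∈
      Metric.closedBall 0 ‖sharp (X + (1 : ℝ) • 1) (Y + (1 : ℝ) • 1)‖ := by
    filter_upwards [Ioc_mem_nhdsGT one_pos] with ε hε
    rw [mem_closedBall_zero_iff]
    exact CStarAlgebra.norm_le_norm_of_nonneg_of_le (sharp_nonneg _ _)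
      (hmono hε.1 (Set.mem_Ioi.2 one_pos) hε.2)
  have : ProperSpace (Matrix (Fin d) (Fin d) ℂ) := FiniteDimensional.proper ℂ _
  obtain ⟨L, hL⟩ := exists_tendsto_nhdsGT_of_monotoneOn (isCompact_closedBall _ _) hmono hbdd
  have hgeoMean : geoMean X Y = L := by
    refine (hL.congr' ?_).limUnder_eq
    filter_upwards [self_mem_nhdsWithin] with ε hε
    simp only [Complex.coe_smul, geoMeanPD_eq_sharp (hpos hX hε) (hpos hY hε).nonneg]
  exact hgeoMean ▸ hL

lemma geoMean_nonneg (hX : 0 ≤ X) (hY : 0 ≤ Y) : 0 ≤ geoMean X Y :=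
  ge_of_tendsto' (tendsto_geoMean hX hY) fun _ => sharp_nonneg _ _

lemma tendsto_eigsDesc_sharp_add_smul_one (hX : 0 ≤ X) (hY : 0 ≤ Y) (i : Fin d) :
    Tendsto (fun ε : ℝ => eigsDesc (sharp (X + ε • 1) (Y + ε • 1)) i) (𝓝[>] 0)
      (𝓝 (eigsDesc (geoMean X Y) i)) :=
  tendsto_eigsDesc (.of_forall fun _ => (sharp_nonneg _ _).isSelfAdjoint)
    (geoMean_nonneg hX hY).isSelfAdjoint (tendsto_geoMean hX hY) i

lemma tendsto_eigsDesc_add_smul_one (hX : X.IsHermitian) (i : Fin d) :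
    Tendsto (fun ε : ℝ => eigsDesc (X + ε • 1) i) (𝓝[>] 0) (𝓝 (eigsDesc X i)) := by
  simp only [eigsDesc_add_smul_one hX]
  exact tendsto_nhdsWithin_of_tendsto_nhds (Continuous.tendsto' (by fun_prop) _ _ (add_zero _))

lemma isWeakLogMaj_geoMean_sq (hX : 0 ≤ X) (hY : 0 ≤ Y) :
    IsWeakLogMaj (fun i => eigsDesc (geoMean X Y) i ^ 2) fun i => eigsDesc X i * eigsDesc Y i := by
  refine .of_tendsto (fun i => (tendsto_eigsDesc_sharp_add_smul_one hX hY i).pow 2)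
    (fun i => (tendsto_eigsDesc_add_smul_one hX.isSelfAdjoint i).mul
      (tendsto_eigsDesc_add_smul_one hY.isSelfAdjoint i)) ?_
  filter_upwards [self_mem_nhdsWithin] with ε hε
  exact isWeakLogMaj_sharp_sq (isStrictlyPositive_add_smul_one hX hε)
    (isStrictlyPositive_add_smul_one hY hε)

lemma isWeakLogMaj_mul_rev_geoMean_sq (hX : 0 ≤ X) (hY : 0 ≤ Y) :
    IsWeakLogMaj (fun i => eigsDesc X i * eigsDesc Y i.rev)
      fun i => eigsDesc (geoMean X Y) i ^ 2 := by
  refine .of_tendsto (fun i => (tendsto_eigsDesc_add_smul_one hX.isSelfAdjoint i).mul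
      (tendsto_eigsDesc_add_smul_one hY.isSelfAdjoint i.rev))
    (fun i => (tendsto_eigsDesc_sharp_add_smul_one hX hY i).pow 2) ?_
  filter_upwards [self_mem_nhdsWithin] with ε hε
  exact isWeakLogMaj_mul_rev_sharp_sq (isStrictlyPositive_add_smul_one hX hε)
    (isStrictlyPositive_add_smul_one hY hε)

lemma rpow_add_smul_one_le (hX : 0 ≤ X) (hε : 0 ≤ ε) {r : ℝ} (hr : 1 ≤ r) :
    X ^ r + ε ^ r • 1 ≤ (X + ε • 1) ^ r := by
  have hr0 : 0 ≤ r := zero_le_one.trans hr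
  have hs : IsSelfAdjoint X := hX.isSelfAdjoint
  have hcont : ContinuousOn (fun t : ℝ => t ^ r) (spectrum ℝ X) :=
    (Real.continuous_rpow_const hr0).continuousOn
  have hshift : X + ε • 1 = cfc (· + ε) X := by
    rw [cfc_add_const ε _ X, cfc_id' ℝ X, Algebra.algebraMap_eq_smul_one]
  have hX_rpow : X ^ r + ε ^ r • 1 = cfc (fun t => t ^ r + ε ^ r) X := by
    rw [cfc_add_const (ε ^ r) _ X hcont, ← CFC.rpow_eq_cfc_real hX, Algebra.algebraMap_eq_smul_one]
  rw [CFC.rpow_eq_cfc_real (add_nonneg hX (smul_nonneg hε zero_le_one)), hX_rpow, hshift,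
    ← cfc_comp' (fun t => t ^ r) (· + ε) X (Real.continuous_rpow_const hr0).continuousOn]
  exact cfc_mono (fun t ht => Real.add_rpow_le_rpow_add (spectrum_nonneg_of_nonneg hX ht) hε hr)
    (by fun_prop) ((Real.continuous_rpow_const hr0).comp_continuousOn (by fun_prop))

lemma tendsto_rpow_nhdsGT_zero {r : ℝ} (hr : 0 < r) :
    Tendsto (fun ε : ℝ => ε ^ r) (𝓝[>] 0) (𝓝[>] 0) := by
  refine tendsto_nhdsWithin_iff.2 ⟨?_, ?_⟩
  · exact tendsto_nhdsWithin_of_tendsto_nhds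
      ((Real.continuous_rpow_const hr.le).tendsto' _ _ (Real.zero_rpow hr.ne'))
  · filter_upwards [self_mem_nhdsWithin] with ε hε using Real.rpow_pos_of_pos hε r

lemma isWeakLogMaj_geoMean_rpow (hX : 0 ≤ X) (hY : 0 ≤ Y) {r : ℝ} (hr : r ∈ Set.Icc 1 2) :
    IsWeakLogMaj (eigsDesc (geoMean (X ^ r) (Y ^ r))) fun i => eigsDesc (geoMean X Y) i ^ r := by
  have hr0 : 0 < r := one_pos.trans_le hr.1
  refine .of_tendsto (fun i => (tendsto_eigsDesc_sharp_add_smul_one CFC.rpow_nonneg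
    CFC.rpow_nonneg i).comp (tendsto_rpow_nhdsGT_zero hr0))
    (fun i => (tendsto_eigsDesc_sharp_add_smul_one hX hY i).rpow_const (.inr hr0.le)) ?_
  filter_upwards [self_mem_nhdsWithin] with ε (hε : 0 < ε) S
  have hεr : 0 < ε ^ r := Real.rpow_pos_of_pos hε r
  have hle : sharp (X ^ r + ε ^ r • 1) (Y ^ r + ε ^ r • 1) ≤
      sharp ((X + ε • 1) ^ r) ((Y + ε • 1) ^ r) :=
    sharp_mono (isStrictlyPositive_add_smul_one CFC.rpow_nonneg hεr)
      (isStrictlyPositive_add_smul_one CFC.rpow_nonneg hεr) (rpow_add_smul_one_le hX hε.le hr.1)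
      (rpow_add_smul_one_le hY hε.le hr.1)
  refine (prod_le_prod (fun i _ => eigsDesc_nonneg (sharp_nonneg _ _) i) fun i _ =>
    eigsDesc_mono (sharp_nonneg _ _).isSelfAdjoint (sharp_nonneg _ _).isSelfAdjoint hle i).trans ?_
  exact isWeakLogMaj_sharp_rpow (isStrictlyPositive_add_smul_one hX hε)
    (isStrictlyPositive_add_smul_one hY hε) hr S

end Regularization

section Gmat

open scoped MatrixOrder Matrix.Norms.L2Operator

variable {d : ℕ} {A B : Matrix (Fin d) (Fin d) ℂ} {p q : ℝ}

lemma eigsDesc_Gmat (hA : 0 ≤ A) (hB : 0 ≤ B) (hp : 0 ≤ p) :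
    eigsDesc (Gmat A B p) = fun i => eigsDesc (geoMean (A ^ p) (B ^ p)) i ^ (2 / p) := by
  have hAB : 0 ≤ geoMean (A ^ p) (B ^ p) := geoMean_nonneg CFC.rpow_nonneg CFC.rpow_nonneg
  rw [Gmat, psdPow_eq_rpow hA, psdPow_eq_rpow hB, psdPow_eq_rpow hAB,
    eigsDesc_rpow hAB (div_nonneg zero_le_two hp)]

lemma eigsDesc_geoMean_rpow_nonneg (A B : Matrix (Fin d) (Fin d) ℂ) (p : ℝ) (i : Fin d) :
    0 ≤ eigsDesc (geoMean (A ^ p) (B ^ p)) i :=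
  eigsDesc_nonneg (geoMean_nonneg CFC.rpow_nonneg CFC.rpow_nonneg) i

lemma eigsDesc_Gmat_nonneg (hA : 0 ≤ A) (hB : 0 ≤ B) (hp : 0 ≤ p) (i : Fin d) :
    0 ≤ eigsDesc (Gmat A B p) i := by
  rw [eigsDesc_Gmat hA hB hp]
  exact Real.rpow_nonneg (eigsDesc_geoMean_rpow_nonneg A B p i) _

lemma isWeakLogMaj_eigsDesc_Gmat_of_le_two_mul (hA : 0 ≤ A) (hB : 0 ≤ B) (hp : 0 < p)
    (hpq : p ≤ q) (hqp : q ≤ 2 * p) :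
    IsWeakLogMaj (eigsDesc (Gmat A B q)) (eigsDesc (Gmat A B p)) := by
  have hq : 0 < q := hp.trans_le hpq
  have hr : q / p ∈ Set.Icc 1 2 := ⟨(one_le_div hp).2 hpq, (div_le_iff₀ hp).2 hqp⟩
  have hpow {X : Matrix (Fin d) (Fin d) ℂ} (hX : 0 ≤ X) : (X ^ p) ^ (q / p) = X ^ q := by
    rw [CFC.rpow_rpow_of_exponent_nonneg X p (q / p) hp.le (div_pos hq hp).le,
      mul_div_cancel₀ _ hp.ne']
  have h := (isWeakLogMaj_geoMean_rpow (CFC.rpow_nonneg (a := A) (y := p))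
      (CFC.rpow_nonneg (a := B) (y := p)) hr).rpow
    (eigsDesc_nonneg (geoMean_nonneg CFC.rpow_nonneg CFC.rpow_nonneg))
    (fun i => Real.rpow_nonneg (eigsDesc_geoMean_rpow_nonneg A B p i) _) (div_pos two_pos hq).le
  rw [hpow hA, hpow hB] at h
  rw [eigsDesc_Gmat hA hB hq.le, eigsDesc_Gmat hA hB hp.le]
  convert h using 2 with i
  rw [← Real.rpow_mul (eigsDesc_geoMean_rpow_nonneg A B p i)]
  congr 1
  field_simp

lemma isWeakLogMaj_eigsDesc_Gmat_of_le (hA : 0 ≤ A) (hB : 0 ≤ B) (hp : 0 < p) (hpq : p ≤ q) :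
    IsWeakLogMaj (eigsDesc (Gmat A B q)) (eigsDesc (Gmat A B p)) := by
  obtain ⟨n, hn⟩ := pow_unbounded_of_one_lt (q / p) one_lt_two
  rw [div_lt_iff₀ hp] at hn
  induction n generalizing q with
  | zero => exact isWeakLogMaj_eigsDesc_Gmat_of_le_two_mul hA hB hp hpq (by linarith)
  | succ n ih =>
    rcases le_total q (2 * p) with hqp | hqp
    · exact isWeakLogMaj_eigsDesc_Gmat_of_le_two_mul hA hB hp hpq hqp
    · have hhalf : IsWeakLogMaj (eigsDesc (Gmat A B q)) (eigsDesc (Gmat A B (q / 2))) :=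
        isWeakLogMaj_eigsDesc_Gmat_of_le_two_mul hA hB (by linarith) (by linarith) (by linarith)
      exact hhalf.trans (ih (by linarith) (by rw [pow_succ] at hn; linarith))

lemma eigsDesc_Gmat_eq_sq_rpow_inv (hA : 0 ≤ A) (hB : 0 ≤ B) (hp : 0 ≤ p) :
    eigsDesc (Gmat A B p) = fun i => (eigsDesc (geoMean (A ^ p) (B ^ p)) i ^ 2) ^ p⁻¹ := by
  rw [eigsDesc_Gmat hA hB hp]
  ext i
  rw [← Real.rpow_natCast_mul (eigsDesc_geoMean_rpow_nonneg A B p i), Nat.cast_two, div_eq_mul_inv]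

lemma mul_eigsDesc_rpow_rpow_inv (hA : 0 ≤ A) (hB : 0 ≤ B) (hp : 0 < p) (i j : Fin d) :
    (eigsDesc (A ^ p) i * eigsDesc (B ^ p) j) ^ p⁻¹ = eigsDesc A i * eigsDesc B j := by
  have hAi := eigsDesc_nonneg hA i
  have hBj := eigsDesc_nonneg hB j
  rw [eigsDesc_rpow hA hp.le, eigsDesc_rpow hB hp.le, ← Real.mul_rpow hAi hBj,
    Real.rpow_rpow_inv (mul_nonneg hAi hBj) hp.ne']

lemma mul_eigsDesc_rpow_nonneg (A B : Matrix (Fin d) (Fin d) ℂ) (p : ℝ) (i j : Fin d) :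
    0 ≤ eigsDesc (A ^ p) i * eigsDesc (B ^ p) j :=
  mul_nonneg (eigsDesc_nonneg CFC.rpow_nonneg i) (eigsDesc_nonneg CFC.rpow_nonneg j)

lemma isWeakLogMaj_eigsDesc_Gmat_mul (hA : 0 ≤ A) (hB : 0 ≤ B) (hp : 0 < p) :
    IsWeakLogMaj (eigsDesc (Gmat A B p)) fun i => eigsDesc A i * eigsDesc B i := by
  rw [eigsDesc_Gmat_eq_sq_rpow_inv hA hB hp.le]
  simp only [← mul_eigsDesc_rpow_rpow_inv hA hB hp]
  exact (isWeakLogMaj_geoMean_sq CFC.rpow_nonneg CFC.rpow_nonneg).rpow (fun _ => sq_nonneg _)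
    (fun i => mul_eigsDesc_rpow_nonneg A B p i i) (inv_nonneg.2 hp.le)

lemma isWeakLogMaj_mul_rev_eigsDesc_Gmat (hA : 0 ≤ A) (hB : 0 ≤ B) (hp : 0 < p) :
    IsWeakLogMaj (fun i => eigsDesc A i * eigsDesc B i.rev) (eigsDesc (Gmat A B p)) := by
  rw [eigsDesc_Gmat_eq_sq_rpow_inv hA hB hp.le]
  simp only [← mul_eigsDesc_rpow_rpow_inv hA hB hp]
  exact (isWeakLogMaj_mul_rev_geoMean_sq CFC.rpow_nonneg CFC.rpow_nonneg).rpow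
    (fun i => mul_eigsDesc_rpow_nonneg A B p i i.rev) (fun _ => sq_nonneg _) (inv_nonneg.2 hp.le)

lemma exists_tendsto_eigsDesc_Gmat_apply (hA : 0 ≤ A) (hB : 0 ≤ B) (i : Fin d) :
    ∃ c, Tendsto (fun p => eigsDesc (Gmat A B p) i) atTop (𝓝 c) := by
  obtain ⟨c, hc⟩ := exists_tendsto_of_isWeakLogMaj
    (f := fun p : Set.Ioi (0 : ℝ) => eigsDesc (Gmat A B p)) (fun p => eigsDesc_antitone _)
    (fun p i => eigsDesc_Gmat_nonneg hA hB (le_of_lt p.2) i)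
    (fun p q hpq => isWeakLogMaj_eigsDesc_Gmat_of_le hA hB p.2 hpq) i
  exact ⟨c, tendsto_comp_val_Ioi_atTop.1 hc⟩

lemma exists_tendsto_eigsDesc_Gmat (hA : 0 ≤ A) (hB : 0 ≤ B) :
    ∃ c : Fin d → ℝ, (∀ i, Tendsto (fun p => eigsDesc (Gmat A B p) i) atTop (𝓝 (c i))) ∧
      Antitone c ∧ (∀ i, 0 ≤ c i) ∧ IsWeakLogMaj c (fun i => eigsDesc A i * eigsDesc B i) ∧
      IsWeakLogMaj (fun i => eigsDesc A i * eigsDesc B i.rev) c := by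
  choose c hc using exists_tendsto_eigsDesc_Gmat_apply hA hB
  have hpos : ∀ᶠ p : ℝ in atTop, 0 < p := eventually_gt_atTop 0
  refine ⟨c, hc, fun i j hij => ?_, fun i => ?_, ?_, ?_⟩
  · exact le_of_tendsto_of_tendsto' (hc j) (hc i) fun p => eigsDesc_antitone _ hij
  · exact ge_of_tendsto (hc i) (hpos.mono fun p hp => eigsDesc_Gmat_nonneg hA hB hp.le i)
  · exact .of_tendsto hc (fun _ => tendsto_const_nhds)
      (hpos.mono fun p hp => isWeakLogMaj_eigsDesc_Gmat_mul hA hB hp)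
  · exact .of_tendsto (fun _ => tendsto_const_nhds) hc
      (hpos.mono fun p hp => isWeakLogMaj_mul_rev_eigsDesc_Gmat hA hB hp)

end Gmat

/-- For every `i`, the `i`-th largest eigenvalue of `G_p = (A^p # B^p)^{2/p}` converges
as `p → ∞`; the limits `λ̂_i` satisfy `a_1 b_1 ≥ λ̂_1 ≥ … ≥ λ̂_d ≥ a_d b_d` and the
log-majorizations `(a_i b_{d+1-i}) ≺_(log) (λ̂_i) ≺_(log) (a_i b_i)`. -/
theorem geometric_mean_eigenvalue_limits_exist
    {d : ℕ} (hd : 0 < d) (A B V W : Matrix (Fin d) (Fin d) ℂ) (a b : Fin d → ℝ)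
    (hA : A.PosSemidef) (hB : B.PosSemidef)
    (hV : V ∈ Matrix.unitaryGroup (Fin d) ℂ)
    (hW : W ∈ Matrix.unitaryGroup (Fin d) ℂ)
    (ha : Antitone a) (hb : Antitone b)
    (ha0 : ∀ i, 0 ≤ a i) (hb0 : ∀ i, 0 ≤ b i)
    (hAd : A = V * Matrix.diagonal (fun i => (a i : ℂ)) * Vᴴ)
    (hBd : B = W * Matrix.diagonal (fun i => (b i : ℂ)) * Wᴴ) :
    ∃ lamhat : Fin d → ℝ,
      (∀ i, Tendsto (fun p : ℝ => eigsDesc (Gmat A B p) i) atTop (𝓝 (lamhat i))) ∧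
      Antitone lamhat ∧
      lamhat ⟨0, hd⟩ ≤ a ⟨0, hd⟩ * b ⟨0, hd⟩ ∧
      a ⟨d - 1, Nat.sub_lt hd one_pos⟩ * b ⟨d - 1, Nat.sub_lt hd one_pos⟩ ≤
        lamhat ⟨d - 1, Nat.sub_lt hd one_pos⟩ ∧
      IsLogMaj (fun i => a i * b i.rev) lamhat ∧
      IsLogMaj lamhat (fun i => a i * b i) := by
  have hAa : eigsDesc A = a := hAd ▸ eigsDesc_diagConj ⟨V, hV⟩ ha
  have hBb : eigsDesc B = b := hBd ▸ eigsDesc_diagConj ⟨W, hW⟩ hb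
  obtain ⟨lam, hlam, hanti, hlam0, hup, hlow⟩ := exists_tendsto_eigsDesc_Gmat hA.nonneg hB.nonneg
  rw [hAa, hBb] at hup hlow
  have hab : Antitone fun i => a i * b i := fun i j hij =>
    mul_le_mul (ha hij) (hb hij) (hb0 j) (ha0 i)
  have hrev : ∏ i, a i * b i.rev = ∏ i, a i * b i := by
    have hb_rev : ∏ i : Fin d, b i.rev = ∏ i, b i := Equiv.prod_comp Fin.revPerm b
    rw [prod_mul_distrib, prod_mul_distrib, hb_rev]
  have hprod : ∏ i, lam i = ∏ i, a i * b i := hup.prod_le.antisymm (hrev ▸ hlow.prod_le)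
  exact ⟨lam, hlam, hanti, hup.le_head hd _, hup.last_le hprod hlam0 hab hd _,
    hlow.isLogMaj hanti (hrev.trans hprod.symm), hup.isLogMaj hab hprod⟩
end

section
/- Let A and B be 2×2 positive semidefinite complex matrices with diagonalizations A = V diag(a_1, a_2) V* and B = W diag(b_1, b_2) W*, where V, W are unitary and a_1 ≥ a_2 ≥ 0, b_1 ≥ b_2 ≥ 0. Then G_p := (A^p # B^p)^{2/p} converges as p → ∞ to a positive semidefinite matrix whose eigenvalues (λ̂_1, λ̂_2) (in decreasing order) are (a_1 b_1, a_2 b_2) if the (1,2) entry of V*W is zero, and (max{a_1 b_2, a_2 b_1}, min{a_1 b_2, a_2 b_1}) if the (1,2) entry of V*W is nonzero. -/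
open Matrix Filter Topology Finset
open scoped ComplexOrder

/-!
For positive semidefinite `2 × 2` matrices `X` and `Y`, the Cayley-Hamilton theorem gives
`X # Y = (√(det Y) X + √(det X) Y) / √δ`, where `δ` is the mixed discriminant of `X` and `Y` plus
`2 √(det X) √(det Y)`, as long as `δ > 0`. Normalize `A`, `B` and their powers to have norm `1`.
If `V` and `W` diagonalize `A` and `B`, then `δ ≥ |(V*W)₁₂|²` along these powers, so that the
formula passes to the limit when `(V*W)₁₂ ≠ 0`. Put `p = 2 q`, `s = a₂ / a₁` and `t = b₂ / b₁`, and
suppose `max s t > 0`. The normalized mean has determinant `(s t) ^ q` and, after division by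
`(max s t) ^ q`, converges to a nonzero matrix. Hence the `q`-th roots of its eigenvalues tend to
`max s t` and `min s t`, and the eigenvectors converge as well unless the two limits agree. If
`(V*W)₁₂ = 0`, then `A` and `B` commute and `G_p = A B` for all `p > 0`.
-/

section UnitaryDiag

variable {n : Type*} [Fintype n] [DecidableEq n]

/-- The matrix `U diag(x) U*`, packaged as an algebra homomorphism in the tuple `x` of its
eigenvalues, so that sums, products and polynomials in `x` are computed by `map_add`, `map_mul`
and so on. -/
noncomputable def unitaryDiag (U : unitaryGroup n ℂ) : (n → ℝ) →ₐ[ℝ] Matrix n n ℂ :=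
  ((Unitary.conjStarAlgAut ℝ (Matrix n n ℂ) U).toAlgEquiv.toAlgHom.comp
    (diagonalAlgHom ℝ)).comp (Complex.ofRealAm.compLeft n)

lemma unitaryDiag_apply (U : unitaryGroup n ℂ) (x : n → ℝ) :
    unitaryDiag U x = (U : Matrix n n ℂ) * diagonal (fun i => (x i : ℂ)) * (U : Matrix n n ℂ)ᴴ :=
  rfl

lemma isHermitian_unitaryDiag (U : unitaryGroup n ℂ) (x : n → ℝ) :
    (unitaryDiag U x).IsHermitian :=
  isHermitian_mul_mul_conjTranspose _ (isHermitian_diagonal_of_self_adjoint _ (by ext i; simp))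

lemma posSemidef_unitaryDiag (U : unitaryGroup n ℂ) {x : n → ℝ} (hx : ∀ i, 0 ≤ x i) :
    (unitaryDiag U x).PosSemidef :=
  PosSemidef.mul_mul_conjTranspose_same (by simpa [posSemidef_diagonal_iff] using hx) _

lemma trace_unitaryDiag (U : unitaryGroup n ℂ) (x : n → ℝ) :
    (unitaryDiag U x).trace = ((∑ i, x i : ℝ) : ℂ) := by
  rw [unitaryDiag_apply, trace_mul_comm, ← Matrix.mul_assoc, ← star_eq_conjTranspose,
    Unitary.coe_star_mul_self, Matrix.one_mul, trace_diagonal, Complex.ofReal_sum]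

lemma det_unitaryDiag (U : unitaryGroup n ℂ) (x : n → ℝ) :
    (unitaryDiag U x).det = ((∏ i, x i : ℝ) : ℂ) := by
  rw [unitaryDiag_apply, det_mul_right_comm, ← star_eq_conjTranspose,
    Unitary.mul_star_self_of_mem U.2, Matrix.one_mul, det_diagonal, Complex.ofReal_prod]

lemma eq_unitaryDiag_of_isHermitian {M : Matrix n n ℂ} (hM : M.IsHermitian) :
    M = unitaryDiag hM.eigenvectorUnitary hM.eigenvalues :=
  hM.spectral_theorem

lemma unitaryDiag_comp_eq {U E : unitaryGroup n ℂ} {x y : n → ℝ}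
    (h : unitaryDiag U x = unitaryDiag E y) (f : ℝ → ℝ) :
    unitaryDiag U (f ∘ x) = unitaryDiag E (f ∘ y) := by
  let s : Finset ℝ := univ.image x ∪ univ.image y
  let q := Lagrange.interpolate s id f
  have hq : ∀ t ∈ s, q.eval t = f t := fun t ht =>
    Lagrange.eval_interpolate_at_node f (Function.injective_id.injOn) ht
  have hx : f ∘ x = Polynomial.aeval x q := by
    ext i
    simp [hq, s]
  have hy : f ∘ y = Polynomial.aeval y q := by
    ext i
    simp [hq, s]
  rw [hx, hy, ← Polynomial.aeval_algHom_apply, ← Polynomial.aeval_algHom_apply, h]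

lemma exists_unitaryDiag_comp_perm (U : unitaryGroup n ℂ) (x : n → ℝ) (σ : Equiv.Perm n) :
    ∃ E : unitaryGroup n ℂ, unitaryDiag U x = unitaryDiag E (x ∘ σ) := by
  have hE : (U : Matrix n n ℂ).submatrix id σ ∈ unitaryGroup n ℂ := by
    rw [mem_unitaryGroup_iff, star_eq_conjTranspose, conjTranspose_submatrix,
      submatrix_mul_equiv, ← star_eq_conjTranspose, Unitary.mul_star_self_of_mem U.2,
      submatrix_id_id]
  refine ⟨⟨_, hE⟩, ?_⟩
  have hdiag : diagonal (fun i => ((x ∘ σ) i : ℂ)) =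
      (diagonal fun i => (x i : ℂ)).submatrix σ σ :=
    (submatrix_diagonal_equiv (fun i => (x i : ℂ)) σ).symm
  simp only [unitaryDiag_apply, hdiag, conjTranspose_submatrix, submatrix_mul_equiv,
    submatrix_id_id]

end UnitaryDiag

section Powers

variable {d : ℕ}

lemma psdPow_unitaryDiag (U : unitaryGroup (Fin d) ℂ) (x : Fin d → ℝ) (r : ℝ) :
    psdPow (unitaryDiag U x) r = unitaryDiag U (fun i => x i ^ r) := by
  have hH := isHermitian_unitaryDiag U x
  rw [psdPow, dif_pos hH]
  exact (unitaryDiag_comp_eq (eq_unitaryDiag_of_isHermitian hH) (· ^ r)).symm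

lemma exists_antitone_unitaryDiag {A : Matrix (Fin d) (Fin d) ℂ} (hA : A.PosSemidef) :
    ∃ (U : unitaryGroup (Fin d) ℂ) (x : Fin d → ℝ),
      (∀ i, 0 ≤ x i) ∧ Antitone x ∧ A = unitaryDiag U x := by
  let x := hA.isHermitian.eigenvalues
  let σ := Tuple.sort (OrderDual.toDual ∘ x)
  obtain ⟨E, hE⟩ := exists_unitaryDiag_comp_perm hA.isHermitian.eigenvectorUnitary x σ
  exact ⟨E, x ∘ σ, fun i => hA.eigenvalues_nonneg _,
    Tuple.monotone_sort (OrderDual.toDual ∘ x),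
    (eq_unitaryDiag_of_isHermitian hA.isHermitian).trans hE⟩

lemma posSemidef_psdPow {A : Matrix (Fin d) (Fin d) ℂ} (hA : A.PosSemidef) (r : ℝ) :
    (psdPow A r).PosSemidef := by
  obtain ⟨U, x, hx, -, rfl⟩ := exists_antitone_unitaryDiag hA
  rw [psdPow_unitaryDiag]
  exact posSemidef_unitaryDiag U fun i => Real.rpow_nonneg (hx i) r

lemma psdPow_half_mul_self {A : Matrix (Fin d) (Fin d) ℂ} (hA : A.PosSemidef) :
    psdPow A (1 / 2) * psdPow A (1 / 2) = A := by
  obtain ⟨U, x, hx, -, rfl⟩ := exists_antitone_unitaryDiag hA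
  rw [psdPow_unitaryDiag, ← map_mul]
  congr 1 with i
  rw [Pi.mul_apply, ← Real.sqrt_eq_rpow, Real.mul_self_sqrt (hx i)]

lemma psdPow_mul_psdPow_neg {A : Matrix (Fin d) (Fin d) ℂ} (hA : A.PosDef) (r : ℝ) :
    psdPow A r * psdPow A (-r) = 1 := by
  have hA' := eq_unitaryDiag_of_isHermitian hA.isHermitian
  rw [hA', psdPow_unitaryDiag, psdPow_unitaryDiag, ← map_mul,
    ← map_one (unitaryDiag hA.isHermitian.eigenvectorUnitary)]
  congr 1 with i
  simp [← Real.rpow_add (hA.eigenvalues_pos i)]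

lemma psdPow_zero_left {r : ℝ} (hr : r ≠ 0) :
    psdPow (0 : Matrix (Fin d) (Fin d) ℂ) r = 0 := by
  rw [← map_zero (unitaryDiag 1), psdPow_unitaryDiag]
  exact congrArg _ (funext fun _ => Real.zero_rpow hr)

lemma psdPow_smul {A : Matrix (Fin d) (Fin d) ℂ} (hA : A.PosSemidef) {c : ℝ} (hc : 0 ≤ c)
    (r : ℝ) : psdPow (c • A) r = c ^ r • psdPow A r := by
  obtain ⟨U, x, hx, -, rfl⟩ := exists_antitone_unitaryDiag hA
  rw [← map_smul, psdPow_unitaryDiag, psdPow_unitaryDiag, ← map_smul]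
  congr 1 with i
  exact Real.mul_rpow hc (hx i)

end Powers

section TwoMean

variable {n : Type*} [Fintype n] [DecidableEq n]

/-- `√(det X)`, for a matrix `X` whose determinant is a nonnegative real number. -/
noncomputable def sqrtDet (X : Matrix n n ℂ) : ℝ :=
  √X.det.re

/-- The radicand in the closed formula for the geometric mean of two `2 × 2` matrices: the mixed
discriminant of `X` and `Y` plus `2 √(det X) √(det Y)`. -/
noncomputable def meanDisc (X Y : Matrix (Fin 2) (Fin 2) ℂ) : ℝ :=
  ((X + Y).det - X.det - Y.det).re + 2 * (sqrtDet X * sqrtDet Y)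

/-- The closed formula for the geometric mean of two `2 × 2` matrices,
`(√(det Y) X + √(det X) Y) / √(meanDisc X Y)`. It is also meaningful for singular matrices, as long
as `meanDisc X Y ≠ 0`. -/
noncomputable def twoMean (X Y : Matrix (Fin 2) (Fin 2) ℂ) : Matrix (Fin 2) (Fin 2) ℂ :=
  (√(meanDisc X Y))⁻¹ • (sqrtDet Y • X + sqrtDet X • Y)

lemma det_smul_add_smul_sub (X Y : Matrix (Fin 2) (Fin 2) ℂ) (s t : ℝ) :
    (s • X + t • Y).det - (s • X).det - (t • Y).det =
      (s * t) • ((X + Y).det - X.det - Y.det) := by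
  simp only [det_fin_two, Matrix.add_apply, Matrix.smul_apply, Complex.real_smul]
  push_cast
  ring

lemma sqrtDet_nonneg (X : Matrix n n ℂ) : 0 ≤ sqrtDet X :=
  Real.sqrt_nonneg _

lemma ofReal_sqrtDet_sq {X : Matrix n n ℂ} (hX : X.PosSemidef) :
    (sqrtDet X : ℂ) ^ 2 = X.det := by
  obtain ⟨hre, him⟩ := Complex.nonneg_iff.1 hX.det_nonneg
  rw [sqrtDet, ← Complex.ofReal_pow, Real.sq_sqrt hre]
  exact Complex.ext rfl him

lemma sqrtDet_smul (X : Matrix (Fin 2) (Fin 2) ℂ) {c : ℝ} (hc : 0 ≤ c) :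
    sqrtDet (c • X) = c * sqrtDet X := by
  rw [sqrtDet, det_smul_of_tower, Fintype.card_fin, Complex.smul_re, smul_eq_mul,
    Real.sqrt_mul (sq_nonneg c), Real.sqrt_sq hc, sqrtDet]

lemma meanDisc_smul_smul (X Y : Matrix (Fin 2) (Fin 2) ℂ) {c d : ℝ} (hc : 0 ≤ c) (hd : 0 ≤ d) :
    meanDisc (c • X) (d • Y) = c * d * meanDisc X Y := by
  rw [meanDisc, meanDisc, det_smul_add_smul_sub, sqrtDet_smul X hc, sqrtDet_smul Y hd,
    Complex.smul_re, smul_eq_mul]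
  ring

lemma twoMean_smul_smul (X Y : Matrix (Fin 2) (Fin 2) ℂ) {c d : ℝ} (hc : 0 ≤ c) (hd : 0 ≤ d) :
    twoMean (c • X) (d • Y) = √(c * d) • twoMean X Y := by
  have hcd : (√(c * d))⁻¹ * (c * d) = √(c * d) := by rw [mul_comm, ← div_eq_mul_inv, Real.div_sqrt]
  rw [twoMean, twoMean, meanDisc_smul_smul X Y hc hd, sqrtDet_smul X hc, sqrtDet_smul Y hd,
    Real.sqrt_mul (mul_nonneg hc hd)]
  conv_rhs => rw [← hcd]
  module

lemma det_mul_mul_conjTranspose (S X : Matrix n n ℂ) :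
    (S * X * Sᴴ).det = ‖S.det‖ ^ 2 • X.det := by
  rw [det_mul_right_comm, det_mul, det_mul, det_conjTranspose, Complex.star_def, Complex.mul_conj,
    Complex.normSq_eq_norm_sq, Complex.real_smul]

lemma sqrtDet_mul_mul_conjTranspose (S X : Matrix n n ℂ) :
    sqrtDet (S * X * Sᴴ) = ‖S.det‖ * sqrtDet X := by
  rw [sqrtDet, det_mul_mul_conjTranspose, Complex.smul_re, smul_eq_mul,
    Real.sqrt_mul (sq_nonneg _), Real.sqrt_sq (norm_nonneg _), sqrtDet]

lemma meanDisc_mul_mul_conjTranspose (S X Y : Matrix (Fin 2) (Fin 2) ℂ) :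
    meanDisc (S * X * Sᴴ) (S * Y * Sᴴ) = ‖S.det‖ ^ 2 * meanDisc X Y := by
  rw [meanDisc, meanDisc, ← Matrix.add_mul, ← Matrix.mul_add]
  simp only [det_mul_mul_conjTranspose, sqrtDet_mul_mul_conjTranspose, ← smul_sub,
    Complex.smul_re, smul_eq_mul]
  ring

lemma twoMean_mul_mul_conjTranspose {S : Matrix (Fin 2) (Fin 2) ℂ} (hS : S.det ≠ 0)
    (X Y : Matrix (Fin 2) (Fin 2) ℂ) :
    twoMean (S * X * Sᴴ) (S * Y * Sᴴ) = S * twoMean X Y * Sᴴ := by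
  have hS' : ‖S.det‖ ≠ 0 := norm_ne_zero_iff.2 hS
  rw [twoMean, twoMean, meanDisc_mul_mul_conjTranspose, sqrtDet_mul_mul_conjTranspose,
    sqrtDet_mul_mul_conjTranspose, Real.sqrt_mul (sq_nonneg _), Real.sqrt_sq (norm_nonneg _)]
  simp only [Matrix.mul_add, Matrix.add_mul, Matrix.mul_smul, Matrix.smul_mul, smul_add, smul_smul]
  congr 2 <;> field_simp

lemma posSemidef_twoMean {X Y : Matrix (Fin 2) (Fin 2) ℂ} (hX : X.PosSemidef)
    (hY : Y.PosSemidef) : (twoMean X Y).PosSemidef :=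
  ((hX.smul (sqrtDet_nonneg Y)).add (hY.smul (sqrtDet_nonneg X))).smul
    (inv_nonneg.2 (Real.sqrt_nonneg _))

lemma ofReal_meanDisc {X Y : Matrix (Fin 2) (Fin 2) ℂ} (hX : X.PosSemidef) (hY : Y.PosSemidef) :
    (meanDisc X Y : ℂ) =
      (X + Y).det - X.det - Y.det + 2 * (sqrtDet X * sqrtDet Y) := by
  rw [meanDisc, ← ofReal_sqrtDet_sq hX, ← ofReal_sqrtDet_sq hY, ← ofReal_sqrtDet_sq (hX.add hY)]
  norm_cast

lemma det_twoMean {X Y : Matrix (Fin 2) (Fin 2) ℂ} (hX : X.PosSemidef) (hY : Y.PosSemidef)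
    (hXY : 0 < meanDisc X Y) :
    (twoMean X Y).det = ((sqrtDet X * sqrtDet Y : ℝ) : ℂ) := by
  have hnum : (sqrtDet Y • X + sqrtDet X • Y).det =
      ((sqrtDet X * sqrtDet Y * meanDisc X Y : ℝ) : ℂ) := by
    have hmixed := det_smul_add_smul_sub X Y (sqrtDet Y) (sqrtDet X)
    simp only [det_smul_of_tower, Fintype.card_fin, Complex.real_smul] at hmixed
    push_cast at hmixed ⊢
    rw [ofReal_meanDisc hX hY]
    linear_combination hmixed - (sqrtDet Y ^ 2 : ℂ) * ofReal_sqrtDet_sq hX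
      - (sqrtDet X ^ 2 : ℂ) * ofReal_sqrtDet_sq hY
  rw [twoMean, det_smul_of_tower, hnum, Fintype.card_fin, inv_pow, Real.sq_sqrt hXY.le,
    Complex.real_smul, ← Complex.ofReal_mul]
  field_simp

lemma twoMean_one_eq_psdPow_half {Z : Matrix (Fin 2) (Fin 2) ℂ} (hZ : Z.PosSemidef) :
    twoMean 1 Z = psdPow Z (1 / 2) := by
  obtain ⟨U, x, hx, -, rfl⟩ := exists_antitone_unitaryDiag hZ
  have hroot : sqrtDet (unitaryDiag U x) = √(x 0) * √(x 1) := by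
    simp [sqrtDet, det_unitaryDiag, Real.sqrt_mul (hx 0)]
  have hroot_one : sqrtDet (1 : Matrix (Fin 2) (Fin 2) ℂ) = 1 := by simp [sqrtDet]
  have hdisc : meanDisc 1 (unitaryDiag U x) = (√(x 0) + √(x 1)) ^ 2 := by
    rw [meanDisc, hroot, hroot_one, ← map_one (unitaryDiag U), ← map_add, det_unitaryDiag,
      det_unitaryDiag, det_unitaryDiag, ← Complex.ofReal_sub, ← Complex.ofReal_sub,
      Complex.ofReal_re, add_sq, Real.sq_sqrt (hx 0), Real.sq_sqrt (hx 1)]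
    simp only [Fin.prod_univ_two, Pi.add_apply, Pi.one_apply]
    ring
  have hentry : ∀ i, (√(x 0) + √(x 1))⁻¹ * (√(x 0) * √(x 1) + x i) = √(x i) := by
    have h0 := Real.sqrt_nonneg (x 0)
    have h1 := Real.sqrt_nonneg (x 1)
    rcases (add_nonneg h0 h1).eq_or_lt with h | h
    · obtain ⟨hx0, hx1⟩ := (add_eq_zero_iff_of_nonneg h0 h1).1 h.symm
      simp [Fin.forall_fin_two, hx0, hx1]
    · refine Fin.forall_fin_two.2 ⟨?_, ?_⟩ <;> rw [inv_mul_eq_iff_eq_mul₀ h.ne']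
      · linear_combination -Real.mul_self_sqrt (hx 0)
      · linear_combination -Real.mul_self_sqrt (hx 1)
  rw [psdPow_unitaryDiag, twoMean, hroot, hroot_one, hdisc, Real.sqrt_sq (by positivity),
    ← map_one (unitaryDiag U), ← map_smul, ← map_smul, ← map_add, ← map_smul]
  congr 1 with i
  simp only [Pi.smul_apply, Pi.add_apply, Pi.one_apply, smul_eq_mul, mul_one, one_mul, hentry,
    ← Real.sqrt_eq_rpow]

end TwoMean

section GeometricMean

lemma geoMeanPD_eq_twoMean {X Y : Matrix (Fin 2) (Fin 2) ℂ} (hX : X.PosDef)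
    (hY : Y.PosSemidef) : geoMeanPD X Y = twoMean X Y := by
  rw [geoMeanPD]
  set S := psdPow X (1 / 2)
  set R := psdPow X (-(1 / 2))
  have hSS : S * S = X := psdPow_half_mul_self hX.posSemidef
  have hSR : S * R = 1 := psdPow_mul_psdPow_neg hX (1 / 2)
  have hS : Sᴴ = S := (posSemidef_psdPow hX.posSemidef _).isHermitian
  have hR : Rᴴ = R := (posSemidef_psdPow hX.posSemidef _).isHermitian
  have hZ : (R * Y * R).PosSemidef := by
    simpa only [hR] using hY.mul_mul_conjTranspose_same R
  have hZY : S * (R * Y * R) * S = Y := by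
    rw [Matrix.mul_assoc, Matrix.mul_assoc, mul_eq_one_comm.1 hSR, Matrix.mul_one,
      ← Matrix.mul_assoc, hSR, Matrix.one_mul]
  calc S * psdPow (R * Y * R) (1 / 2) * S = S * twoMean 1 (R * Y * R) * Sᴴ := by
        rw [twoMean_one_eq_psdPow_half hZ, hS]
    _ = twoMean (S * 1 * Sᴴ) (S * (R * Y * R) * Sᴴ) :=
        (twoMean_mul_mul_conjTranspose (det_ne_zero_of_right_inverse hSR) _ _).symm
    _ = twoMean X Y := by rw [hS, hZY, Matrix.mul_one, hSS]

lemma continuous_sqrtDet {n : Type*} [Fintype n] [DecidableEq n] :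
    Continuous fun X : Matrix n n ℂ => sqrtDet X := by
  unfold sqrtDet
  fun_prop

lemma tendsto_meanDisc {ι : Type*} {l : Filter ι} {f g : ι → Matrix (Fin 2) (Fin 2) ℂ}
    {X Y : Matrix (Fin 2) (Fin 2) ℂ} (hf : Tendsto f l (𝓝 X)) (hg : Tendsto g l (𝓝 Y)) :
    Tendsto (fun i => meanDisc (f i) (g i)) l (𝓝 (meanDisc X Y)) := by
  have hdet : ∀ {h : ι → Matrix (Fin 2) (Fin 2) ℂ} {Z}, Tendsto h l (𝓝 Z) →
      Tendsto (fun i => (h i).det) l (𝓝 Z.det) :=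
    fun {_ Z} h => (continuous_id.matrix_det.tendsto Z).comp h
  exact ((Complex.continuous_re.tendsto _).comp
    (((hdet (hf.add hg)).sub (hdet hf)).sub (hdet hg))).add
      ((((continuous_sqrtDet.tendsto X).comp hf).mul
        ((continuous_sqrtDet.tendsto Y).comp hg)).const_mul 2)

lemma tendsto_add_smul_one {d : ℕ} (X : Matrix (Fin d) (Fin d) ℂ) :
    Tendsto (fun ε : ℝ => X + (ε : ℂ) • 1) (𝓝[>] 0) (𝓝 X) := by
  have hcont : Continuous fun ε : ℝ => X + (ε : ℂ) • (1 : Matrix (Fin d) (Fin d) ℂ) := by fun_prop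
  simpa using (hcont.tendsto 0).mono_left nhdsWithin_le_nhds

lemma geoMean_eq_twoMean {X Y : Matrix (Fin 2) (Fin 2) ℂ} (hX : X.PosSemidef)
    (hY : Y.PosSemidef) (hXY : 0 < meanDisc X Y) : geoMean X Y = twoMean X Y := by
  have hlimX := tendsto_add_smul_one X
  have hlimY := tendsto_add_smul_one Y
  have hlim : Tendsto (fun ε : ℝ => twoMean (X + (ε : ℂ) • 1) (Y + (ε : ℂ) • 1)) (𝓝[>] 0)
      (𝓝 (twoMean X Y)) :=
    ((tendsto_meanDisc hlimX hlimY).sqrt.inv₀ (Real.sqrt_pos.2 hXY).ne').smul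
      ((((continuous_sqrtDet.tendsto Y).comp hlimY).smul hlimX).add
        (((continuous_sqrtDet.tendsto X).comp hlimX).smul hlimY))
  refine (hlim.congr' ?_).limUnder_eq
  filter_upwards [self_mem_nhdsWithin] with ε hε
  have hε' : ((ε : ℂ) • (1 : Matrix (Fin 2) (Fin 2) ℂ)).PosDef :=
    PosDef.one.smul (by exact_mod_cast hε)
  exact (geoMeanPD_eq_twoMean (PosDef.posSemidef_add hX hε') (hY.add hε'.posSemidef)).symm

lemma continuous_unitaryDiag {n : Type*} [Fintype n] [DecidableEq n] (U : unitaryGroup n ℂ) :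
    Continuous (unitaryDiag U) :=
  (unitaryDiag U).toLinearMap.continuous_of_finiteDimensional

lemma geoMeanPD_unitaryDiag {d : ℕ} (U : unitaryGroup (Fin d) ℂ) {x y : Fin d → ℝ}
    (hx : ∀ i, 0 < x i) (hy : ∀ i, 0 ≤ y i) :
    geoMeanPD (unitaryDiag U x) (unitaryDiag U y) = unitaryDiag U (fun i => √(x i * y i)) := by
  simp only [geoMeanPD, psdPow_unitaryDiag, ← map_mul]
  congr 1 with i
  have hinv : (√(x i))⁻¹ * y i * (√(x i))⁻¹ = y i / x i := by
    rw [mul_right_comm, ← mul_inv, Real.mul_self_sqrt (hx i).le, div_eq_inv_mul]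
  have hsqrt : √(x i) ≠ 0 := (Real.sqrt_pos.2 (hx i)).ne'
  simp only [Pi.mul_apply, Real.rpow_neg (hx i).le, ← Real.sqrt_eq_rpow]
  rw [hinv, Real.sqrt_div (hy i), Real.sqrt_mul (hx i).le]
  field_simp

lemma geoMean_unitaryDiag {d : ℕ} (U : unitaryGroup (Fin d) ℂ) {x y : Fin d → ℝ}
    (hx : ∀ i, 0 ≤ x i) (hy : ∀ i, 0 ≤ y i) :
    geoMean (unitaryDiag U x) (unitaryDiag U y) = unitaryDiag U (fun i => √(x i * y i)) := by
  have hshift : ∀ (z : Fin d → ℝ) (ε : ℝ),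
      unitaryDiag U z + (ε : ℂ) • 1 = unitaryDiag U (fun i => z i + ε) := by
    intro z ε
    rw [Complex.coe_smul, ← map_one (unitaryDiag U), ← map_smul, ← map_add]
    congr 1 with i
    simp
  have hcont : Continuous fun ε : ℝ => unitaryDiag U (fun i => √((x i + ε) * (y i + ε))) :=
    (continuous_unitaryDiag U).comp (by fun_prop)
  have hlim := (hcont.tendsto 0).mono_left (nhdsWithin_le_nhds (s := Set.Ioi 0))
  simp only [add_zero] at hlim
  refine (hlim.congr' ?_).limUnder_eq
  filter_upwards [self_mem_nhdsWithin] with ε hε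
  rw [hshift, hshift, geoMeanPD_unitaryDiag U (fun i => add_pos_of_nonneg_of_pos (hx i) hε)
    (fun i => add_nonneg (hy i) hε.le)]

lemma Gmat_unitaryDiag {d : ℕ} (U : unitaryGroup (Fin d) ℂ) {x y : Fin d → ℝ}
    (hx : ∀ i, 0 ≤ x i) (hy : ∀ i, 0 ≤ y i) {p : ℝ} (hp : p ≠ 0) :
    Gmat (unitaryDiag U x) (unitaryDiag U y) p = unitaryDiag U (x * y) := by
  rw [Gmat, psdPow_unitaryDiag, psdPow_unitaryDiag,
    geoMean_unitaryDiag U (fun i => Real.rpow_nonneg (hx i) p)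
      (fun i => Real.rpow_nonneg (hy i) p), psdPow_unitaryDiag]
  congr 1 with i
  have hxy : 0 ≤ x i * y i := mul_nonneg (hx i) (hy i)
  rw [← Real.mul_rpow (hx i) (hy i), Real.sqrt_eq_rpow, ← Real.rpow_mul hxy, ← Real.rpow_mul hxy]
  rw [show p * (1 / 2) * (2 / p) = 1 by field_simp, Real.rpow_one, Pi.mul_apply]

lemma tendsto_Gmat_unitaryDiag {d : ℕ} (U : unitaryGroup (Fin d) ℂ) {x y : Fin d → ℝ}
    (hx : ∀ i, 0 ≤ x i) (hy : ∀ i, 0 ≤ y i) :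
    Tendsto (fun p : ℝ => Gmat (unitaryDiag U x) (unitaryDiag U y) p) atTop
      (𝓝 (unitaryDiag U (x * y))) := by
  refine tendsto_const_nhds.congr' ?_
  filter_upwards [eventually_ne_atTop 0] with p hp
  rw [Gmat_unitaryDiag U hx hy hp]

end GeometricMean

section Limits

lemma posSemidef_of_tendsto {n ι : Type*} [Finite n] {l : Filter ι} [l.NeBot]
    {f : ι → Matrix n n ℂ} {A : Matrix n n ℂ} (hf : ∀ᶠ i in l, (f i).PosSemidef)
    (hlim : Tendsto f l (𝓝 A)) : A.PosSemidef := by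
  cases nonempty_fintype n
  refine .of_dotProduct_mulVec_nonneg ?_ fun v => ?_
  · have hstar := (continuous_id.matrix_conjTranspose.tendsto A).comp hlim
    refine tendsto_nhds_unique (hstar.congr' ?_) hlim
    filter_upwards [hf] with i hi using hi.isHermitian
  · have hcont : Continuous fun M : Matrix n n ℂ => star v ⬝ᵥ (M *ᵥ v) := by fun_prop
    refine ge_of_tendsto ((hcont.tendsto A).comp hlim) ?_
    filter_upwards [hf] with i hi using hi.dotProduct_mulVec_nonneg v

variable {n ι : Type*} [Fintype n] [DecidableEq n] {l : Filter ι}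

lemma norm_unitaryDiag_apply_le (U : unitaryGroup n ℂ) (x : n → ℝ) (i j : n) :
    ‖unitaryDiag U x i j‖ ≤ ∑ k, |x k| := by
  have hentry := entry_norm_bound_of_unitary U.2
  rw [unitaryDiag_apply, mul_apply]
  refine (norm_sum_le _ _).trans (sum_le_sum fun k _ => ?_)
  rw [mul_diagonal, conjTranspose_apply, norm_mul, norm_mul, norm_star, Complex.norm_real,
    Real.norm_eq_abs]
  have := mul_le_one₀ (hentry i k) (norm_nonneg _) (hentry j k)
  nlinarith [abs_nonneg (x k)]

lemma tendsto_unitaryDiag_iff {U : ι → unitaryGroup n ℂ} {x : ι → n → ℝ} {z : n → ℝ}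
    {L : Matrix n n ℂ} (hx : Tendsto x l (𝓝 z)) :
    Tendsto (fun i => unitaryDiag (U i) (x i)) l (𝓝 L) ↔
      Tendsto (fun i => unitaryDiag (U i) z) l (𝓝 L) := by
  have hsub : Tendsto (fun i => unitaryDiag (U i) (x i) - unitaryDiag (U i) z) l (𝓝 0) := by
    have hbound : Tendsto (fun i => ∑ k, |(x i - z) k|) l (𝓝 0) := by
      have := tendsto_finsetSum univ fun k _ => ((tendsto_pi_nhds.1 hx k).sub_const (z k)).abs
      simpa using this
    refine tendsto_pi_nhds.2 fun a => tendsto_pi_nhds.2 fun b => ?_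
    refine squeeze_zero_norm (fun i => ?_) hbound
    rw [← map_sub]
    exact norm_unitaryDiag_apply_le _ _ a b
  constructor <;> intro h
  · simpa using h.sub hsub
  · simpa using h.add hsub

lemma tendsto_rpow_inv_atTop {f : ℝ → ℝ} {c : ℝ} (hf : Tendsto f atTop (𝓝 c)) (hc : 0 < c) :
    Tendsto (fun p => f p ^ p⁻¹) atTop (𝓝 1) := by
  simpa using hf.rpow tendsto_inv_atTop_zero (Or.inl hc.ne')

lemma tendsto_rpow_atTop_ite {c : ℝ} (hc0 : 0 ≤ c) (hc1 : c ≤ 1) :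
    Tendsto (fun p : ℝ => c ^ p) atTop (𝓝 (if c = 1 then 1 else 0)) := by
  split_ifs with hc
  · simp [hc]
  · exact tendsto_rpow_atTop_of_base_lt_one c (by linarith) (lt_of_le_of_ne hc1 hc)

lemma tendsto_max_of_tendsto_add_mul {f g : ι → ℝ} {σ π : ℝ} (hgf : ∀ i, g i ≤ f i)
    (hadd : Tendsto (fun i => f i + g i) l (𝓝 σ)) (hmul : Tendsto (fun i => f i * g i) l (𝓝 π)) :
    Tendsto f l (𝓝 ((σ + √(σ ^ 2 - 4 * π)) / 2)) := by
  refine ((hadd.add ((hadd.pow 2).sub (hmul.const_mul 4)).sqrt).div_const 2).congr fun i => ?_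
  rw [show (f i + g i) ^ 2 - 4 * (f i * g i) = (f i - g i) ^ 2 by ring,
    Real.sqrt_sq (sub_nonneg.2 (hgf i))]
  ring

end Limits

section RescaledPowers

lemma exists_tendsto_unitaryDiag_fin_two {ι : Type*} {l : Filter ι}
    {U : ι → unitaryGroup (Fin 2) ℂ} {k : Fin 2 → ℝ} {K : Matrix (Fin 2) (Fin 2) ℂ}
    (hk : k 1 ≠ k 0) (hK : Tendsto (fun i => unitaryDiag (U i) k) l (𝓝 K)) (z : Fin 2 → ℝ) :
    ∃ G, Tendsto (fun i => unitaryDiag (U i) z) l (𝓝 G) := by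
  have hk' : k 0 - k 1 ≠ 0 := sub_ne_zero.2 hk.symm
  obtain ⟨c, e, rfl⟩ : ∃ c e : ℝ, z = c • k + e • 1 := by
    refine ⟨(z 0 - z 1) / (k 0 - k 1), z 0 - (z 0 - z 1) / (k 0 - k 1) * k 0,
      funext (Fin.forall_fin_two.2 ⟨?_, ?_⟩)⟩ <;>
    simp only [Pi.add_apply, Pi.smul_apply, Pi.one_apply, smul_eq_mul] <;> field_simp <;> ring
  refine ⟨c • K + e • 1, ?_⟩
  simpa only [map_add, map_smul, map_one] using (hK.const_smul c).add_const (e • 1)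

lemma exists_tendsto_rescaled {x : ℝ → Fin 2 → ℝ} {m m' κ : ℝ} (hm : 0 < m) (hm' : 0 ≤ m')
    (hmm : m' ≤ m) (hκ : 0 < κ) (hx : ∀ p, x p 1 ≤ x p 0)
    (hadd : Tendsto (fun p => (m ^ p)⁻¹ * x p 0 + (m ^ p)⁻¹ * x p 1) atTop (𝓝 κ))
    (hmul : ∀ p, x p 0 * x p 1 = (m * m') ^ p) :
    ∃ k : Fin 2 → ℝ, Tendsto (fun p => (m ^ p)⁻¹ • x p) atTop (𝓝 k) ∧ 0 < k 0 ∧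
      (m' ≠ m → k 1 ≠ k 0) := by
  have hmp : ∀ p : ℝ, 0 < m ^ p := Real.rpow_pos_of_pos hm
  have hmul' : Tendsto (fun p => (m ^ p)⁻¹ * x p 0 * ((m ^ p)⁻¹ * x p 1)) atTop
      (𝓝 (if m' / m = 1 then 1 else 0)) := by
    refine (tendsto_rpow_atTop_ite (div_nonneg hm' hm.le) ((div_le_one hm).2 hmm)).congr fun p => ?_
    rw [mul_mul_mul_comm, hmul, Real.mul_rpow hm.le hm', Real.div_rpow hm' hm.le]
    field_simp [(hmp p).ne']
  have h0 := tendsto_max_of_tendsto_add_mul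
    (fun p => mul_le_mul_of_nonneg_left (hx p) (inv_nonneg.2 (hmp p).le)) hadd hmul'
  have h1 := (hadd.sub h0).congr fun p => add_sub_cancel_left _ _
  refine ⟨![_, _], tendsto_pi_nhds.2 (Fin.forall_fin_two.2 ⟨h0, h1⟩), ?_, fun hne => ?_⟩
  · exact half_pos (add_pos_of_pos_of_nonneg hκ (Real.sqrt_nonneg _))
  · have hne' : m' / m ≠ 1 := fun h => hne ((div_eq_one_iff_eq hm.ne').1 h)
    simp [hne', Real.sqrt_sq hκ.le, hκ.ne]

lemma tendsto_rpow_inv_of_tendsto {f g : ℝ → ℝ} {m m' κ : ℝ} (hm : 0 < m) (hκ : 0 < κ)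
    (hf : Tendsto (fun p => (m ^ p)⁻¹ * f p) atTop (𝓝 κ)) (hf0 : ∀ p, 0 ≤ f p)
    (hg0 : ∀ p, 0 ≤ g p) (hfg : ∀ p, f p * g p = (m * m') ^ p) (hm' : 0 ≤ m') :
    Tendsto (fun p => f p ^ p⁻¹) atTop (𝓝 m) ∧ Tendsto (fun p => g p ^ p⁻¹) atTop (𝓝 m') := by
  have hF : Tendsto (fun p => f p ^ p⁻¹) atTop (𝓝 m) := by
    have hlim := (tendsto_rpow_inv_atTop hf hκ).const_mul m
    rw [mul_one] at hlim
    refine hlim.congr' ?_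
    filter_upwards [eventually_ne_atTop 0] with p hp
    have hmp := Real.rpow_pos_of_pos hm p
    rw [Real.mul_rpow (inv_nonneg.2 hmp.le) (hf0 p), Real.inv_rpow hmp.le,
      Real.rpow_rpow_inv hm.le hp, mul_inv_cancel_left₀ hm.ne']
  refine ⟨hF, ?_⟩
  have hG := hF.inv₀ hm.ne' |>.mul_const (m * m')
  rw [inv_mul_cancel_left₀ hm.ne'] at hG
  refine hG.congr' ?_
  filter_upwards [eventually_ne_atTop 0, hF.eventually_ne hm.ne'] with p hp hfp
  rw [inv_mul_eq_iff_eq_mul₀ hfp, ← Real.mul_rpow (hf0 p) (hg0 p), hfg,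
    Real.rpow_rpow_inv (mul_nonneg hm.le hm') hp]

/-- After rescaling by `m ^ p`, the larger eigenvalue of `M p` stays bounded away from `0` and `∞`,
so its `p`-th root tends to `m`, and the determinant then forces the other one to `m'`. When
`m' < m` the smaller rescaled eigenvalue vanishes in the limit, so that the limit matrix separates
the eigenvectors; when `m' = m` the eigenvectors do not matter. -/
lemma exists_tendsto_psdPow_inv {M : ℝ → Matrix (Fin 2) (Fin 2) ℂ}
    {K : Matrix (Fin 2) (Fin 2) ℂ} {m m' : ℝ} (hm : 0 < m) (hm' : 0 ≤ m') (hmm : m' ≤ m)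
    (hM : ∀ p, (M p).PosSemidef) (hdet : ∀ p, (M p).det = (((m * m') ^ p : ℝ) : ℂ))
    (hK : Tendsto (fun p => (m ^ p)⁻¹ • M p) atTop (𝓝 K)) (htr : 0 < K.trace.re) :
    ∃ G : Matrix (Fin 2) (Fin 2) ℂ, G.PosSemidef ∧
      Tendsto (fun p => psdPow (M p) p⁻¹) atTop (𝓝 G) ∧
      G.trace = ((m + m' : ℝ) : ℂ) ∧ G.det = ((m * m' : ℝ) : ℂ) := by
  choose U x hx0 hxanti hMx using fun p => exists_antitone_unitaryDiag (hM p)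
  have hprod : ∀ p, x p 0 * x p 1 = (m * m') ^ p := fun p => by
    have h := hdet p
    rw [hMx, det_unitaryDiag, Fin.prod_univ_two] at h
    exact_mod_cast h
  have htrace : Tendsto (fun p => (m ^ p)⁻¹ * x p 0 + (m ^ p)⁻¹ * x p 1) atTop (𝓝 K.trace.re) := by
    have h := (Complex.continuous_re.tendsto _).comp
      ((continuous_id.matrix_trace.tendsto K).comp hK)
    simpa [hMx, trace_unitaryDiag, trace_smul, Function.comp_def] using h
  obtain ⟨k, hk, hk_pos, hk_ne⟩ := exists_tendsto_rescaled hm hm' hmm htr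
    (fun p => hxanti p (Fin.zero_le 1)) htrace hprod
  obtain ⟨hroot, hroot'⟩ := tendsto_rpow_inv_of_tendsto hm hk_pos (tendsto_pi_nhds.1 hk 0)
    (fun p => hx0 p 0) (fun p => hx0 p 1) hprod hm'
  have hroots : Tendsto (fun p i => x p i ^ p⁻¹) atTop (𝓝 ![m, m']) :=
    tendsto_pi_nhds.2 (Fin.forall_fin_two.2 ⟨hroot, hroot'⟩)
  obtain ⟨G, hG⟩ : ∃ G, Tendsto (fun p => unitaryDiag (U p) ![m, m']) atTop (𝓝 G) := by
    by_cases h : m' = m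
    · have hconst : ![m, m'] = m • 1 := by simp [h, funext_iff, Fin.forall_fin_two]
      exact ⟨m • 1, by simp only [hconst, map_smul, map_one, tendsto_const_nhds]⟩
    · simp only [hMx, ← map_smul] at hK
      exact exists_tendsto_unitaryDiag_fin_two (hk_ne h) ((tendsto_unitaryDiag_iff hk).1 hK) _
  have hz : ∀ i, 0 ≤ ![m, m'] i := Fin.forall_fin_two.2 ⟨hm.le, hm'⟩
  refine ⟨G, posSemidef_of_tendsto (.of_forall fun p => posSemidef_unitaryDiag _ hz) hG, ?_, ?_, ?_⟩
  · simpa only [hMx, psdPow_unitaryDiag] using (tendsto_unitaryDiag_iff hroots).2 hG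
  · have h := (continuous_id.matrix_trace.tendsto G).comp hG
    simpa [trace_unitaryDiag, Function.comp_def, eq_comm] using h
  · have h := (continuous_id.matrix_det.tendsto G).comp hG
    simpa [det_unitaryDiag, Function.comp_def, eq_comm] using h

end RescaledPowers

section Overlap

variable {n : Type*} [Fintype n] [DecidableEq n]

lemma unitaryDiag_apply_self (U : unitaryGroup n ℂ) (x : n → ℝ) (i : n) :
    unitaryDiag U x i i = ((∑ k, x k * Complex.normSq (U i k) : ℝ) : ℂ) := by
  rw [unitaryDiag_apply, mul_apply, Complex.ofReal_sum]
  refine sum_congr rfl fun k _ => ?_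
  rw [mul_diagonal, conjTranspose_apply, Complex.star_def, mul_right_comm, Complex.mul_conj,
    ← Complex.ofReal_mul, mul_comm]

lemma unitaryDiag_mul_left (V U : unitaryGroup n ℂ) (x : n → ℝ) :
    unitaryDiag (V * U) x = (V : Matrix n n ℂ) * unitaryDiag U x * (V : Matrix n n ℂ)ᴴ := by
  simp only [unitaryDiag_apply, Submonoid.coe_mul, conjTranspose_mul, Matrix.mul_assoc]

lemma unitaryDiag_mul_left_of_isDiag (V : unitaryGroup n ℂ) {U : unitaryGroup n ℂ}
    (hU : IsDiag (U : Matrix n n ℂ)) (x : n → ℝ) : unitaryDiag (V * U) x = unitaryDiag V x := by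
  have hcomm : (U : Matrix n n ℂ) * diagonal (fun i => (x i : ℂ)) =
      diagonal (fun i => (x i : ℂ)) * (U : Matrix n n ℂ) := by
    rw [← hU.diagonal_diag]
    exact commute_diagonal _ _
  rw [unitaryDiag_mul_left, unitaryDiag_apply U, hcomm, Matrix.mul_assoc (diagonal _),
    ← star_eq_conjTranspose (U : Matrix n n ℂ), Unitary.mul_star_self_of_mem U.2, Matrix.mul_one,
    unitaryDiag_apply]

lemma apply_one_zero_eq_zero_iff (U : unitaryGroup (Fin 2) ℂ) : U 1 0 = 0 ↔ U 0 1 = 0 := by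
  have hrow : ((U : Matrix (Fin 2) (Fin 2) ℂ) * (U : Matrix (Fin 2) (Fin 2) ℂ)ᴴ) 0 0 = 1 := by
    rw [← star_eq_conjTranspose, Unitary.mul_star_self_of_mem U.2, one_apply_eq]
  have hcol : ((U : Matrix (Fin 2) (Fin 2) ℂ)ᴴ * (U : Matrix (Fin 2) (Fin 2) ℂ)) 0 0 = 1 := by
    rw [← star_eq_conjTranspose, Unitary.star_mul_self_of_mem U.2, one_apply_eq]
  simp only [mul_apply, Fin.sum_univ_two, conjTranspose_apply, Complex.star_def, Complex.mul_conj,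
    ← Complex.normSq_eq_conj_mul_self] at hrow hcol
  norm_cast at hrow hcol
  rw [← Complex.normSq_eq_zero, ← Complex.normSq_eq_zero (z := U.1 0 1)]
  constructor <;> intro h <;> linarith

lemma isDiag_of_apply_zero_one_eq_zero {U : unitaryGroup (Fin 2) ℂ} (hU : U 0 1 = 0) :
    IsDiag (U : Matrix (Fin 2) (Fin 2) ℂ) := by
  have hU' := (apply_one_zero_eq_zero_iff U).2 hU
  simp [IsDiag, Pairwise, Fin.forall_fin_two, hU, hU']

lemma meanDisc_unitaryDiag_one_pos {U : unitaryGroup (Fin 2) ℂ} (hU : U 0 1 ≠ 0)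
    {x y : Fin 2 → ℝ} (hx0 : 0 < x 0) (hx1 : 0 ≤ x 1) (hy0 : 0 < y 0) (hy1 : 0 ≤ y 1) :
    0 < meanDisc (unitaryDiag 1 x) (unitaryDiag U y) := by
  have hU' := Complex.normSq_pos.2 (mt (apply_one_zero_eq_zero_iff U).1 hU)
  have hmixed : (unitaryDiag 1 x + unitaryDiag U y).det - (unitaryDiag 1 x).det -
      (unitaryDiag U y).det = x 0 * unitaryDiag U y 1 1 + x 1 * unitaryDiag U y 0 0 := by
    generalize unitaryDiag U y = Y
    simp only [det_fin_two, Matrix.add_apply, unitaryDiag_apply, OneMemClass.coe_one,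
      Matrix.one_mul, conjTranspose_one, Matrix.mul_one, diagonal_apply_eq, ne_eq, zero_ne_one,
      one_ne_zero, not_false_eq_true, diagonal_apply_ne]
    ring
  have hsqrt := mul_nonneg (sqrtDet_nonneg (unitaryDiag 1 x)) (sqrtDet_nonneg (unitaryDiag U y))
  rw [meanDisc, hmixed, unitaryDiag_apply_self, unitaryDiag_apply_self, ← Complex.ofReal_mul,
    ← Complex.ofReal_mul, ← Complex.ofReal_add, Complex.ofReal_re, Fin.sum_univ_two,
    Fin.sum_univ_two]
  have h00 := Complex.normSq_nonneg (U 0 0)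
  have h01 := Complex.normSq_nonneg (U 0 1)
  have h11 := Complex.normSq_nonneg (U 1 1)
  positivity

lemma meanDisc_unitaryDiag_mul_left_pos (V : unitaryGroup (Fin 2) ℂ) {U : unitaryGroup (Fin 2) ℂ}
    (hU : U 0 1 ≠ 0) {x y : Fin 2 → ℝ} (hx0 : 0 < x 0) (hx1 : 0 ≤ x 1) (hy0 : 0 < y 0)
    (hy1 : 0 ≤ y 1) :
    0 < meanDisc (unitaryDiag V x) (unitaryDiag (V * U) y) := by
  have hV : (V : Matrix (Fin 2) (Fin 2) ℂ).det ≠ 0 :=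
    det_ne_zero_of_right_inverse (Unitary.mul_star_self_of_mem V.2)
  rw [← mul_one V, mul_assoc, one_mul, unitaryDiag_mul_left, unitaryDiag_mul_left V U,
    meanDisc_mul_mul_conjTranspose]
  have := norm_pos_iff.2 hV
  have := meanDisc_unitaryDiag_one_pos hU hx0 hx1 hy0 hy1
  positivity

end Overlap

section NoncommutingCase

variable (V : unitaryGroup (Fin 2) ℂ) {U : unitaryGroup (Fin 2) ℂ} {s t : ℝ}

lemma sqrtDet_unitaryDiag_one_sq {r : ℝ} (hr : 0 ≤ r) :
    sqrtDet (unitaryDiag V ![1, r ^ 2]) = r := by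
  rw [sqrtDet, det_unitaryDiag, Complex.ofReal_re]
  simp [Real.sqrt_sq hr]

lemma posSemidef_unitaryDiag_one_sq (r : ℝ) : (unitaryDiag V ![1, r ^ 2]).PosSemidef :=
  posSemidef_unitaryDiag V (Fin.forall_fin_two.2 ⟨zero_le_one, sq_nonneg r⟩)

lemma tendsto_unitaryDiag_one_rpow_sq (hs : s ∈ Set.Icc 0 1) :
    Tendsto (fun q : ℝ => unitaryDiag V ![1, (s ^ q) ^ 2]) atTop
      (𝓝 (unitaryDiag V ![1, (if s = 1 then 1 else 0) ^ 2])) :=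
  ((continuous_unitaryDiag V).tendsto _).comp (tendsto_pi_nhds.2 (Fin.forall_fin_two.2
    ⟨tendsto_const_nhds, (tendsto_rpow_atTop_ite hs.1 hs.2).pow 2⟩))

lemma meanDisc_unitaryDiag_one_sq_pos (hU : U 0 1 ≠ 0) (r r' : ℝ) :
    0 < meanDisc (unitaryDiag V ![1, r ^ 2]) (unitaryDiag (V * U) ![1, r' ^ 2]) :=
  meanDisc_unitaryDiag_mul_left_pos V hU one_pos (sq_nonneg r) one_pos (sq_nonneg r')

lemma exists_tendsto_rescaled_twoMean (hU : U 0 1 ≠ 0) (hs : s ∈ Set.Icc 0 1)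
    (ht : t ∈ Set.Icc 0 1) (hst : 0 < max s t) :
    ∃ K : Matrix (Fin 2) (Fin 2) ℂ, 0 < K.trace.re ∧
      Tendsto (fun q : ℝ => (max s t ^ q)⁻¹ •
        twoMean (unitaryDiag V ![1, (s ^ q) ^ 2]) (unitaryDiag (V * U) ![1, (t ^ q) ^ 2]))
        atTop (𝓝 K) := by
  have hratio : ∀ {c : ℝ}, 0 ≤ c → c ≤ max s t → Tendsto (fun q : ℝ => (max s t ^ q)⁻¹ * c ^ q)
      atTop (𝓝 (if c / max s t = 1 then 1 else 0)) := fun hc0 hc1 =>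
    (tendsto_rpow_atTop_ite (div_nonneg hc0 hst.le) ((div_le_one hst).2 hc1)).congr fun q => by
      rw [Real.div_rpow hc0 hst.le, div_eq_inv_mul]
  have hX := tendsto_unitaryDiag_one_rpow_sq V hs
  have hY := tendsto_unitaryDiag_one_rpow_sq (V * U) ht
  have hdisc := meanDisc_unitaryDiag_one_sq_pos V hU
    (if s = 1 then 1 else 0) (if t = 1 then 1 else 0)
  refine ⟨_, ?_, (((tendsto_meanDisc hX hY).sqrt.inv₀ (Real.sqrt_pos.2 hdisc).ne').smul
    (((hratio ht.1 (le_max_right s t)).smul hX).add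
      ((hratio hs.1 (le_max_left s t)).smul hY))).congr fun q => ?_⟩
  · rw [trace_smul, trace_add, trace_smul, trace_smul, trace_unitaryDiag, trace_unitaryDiag]
    have hmax : s / max s t = 1 ∨ t / max s t = 1 := by
      rcases max_choice s t with h | h <;> rw [h] at hst ⊢
      exacts [Or.inl (div_self hst.ne'), Or.inr (div_self hst.ne')]
    have hinv := inv_pos.2 (Real.sqrt_pos.2 hdisc)
    simp only [Complex.smul_re, Complex.add_re, Complex.ofReal_re, smul_eq_mul, Fin.sum_univ_two,
      cons_val_zero, cons_val_one]
    refine mul_pos hinv ?_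
    rcases hmax with h | h <;> rw [if_pos h] <;> positivity
  · rw [twoMean, sqrtDet_unitaryDiag_one_sq V (Real.rpow_nonneg hs.1 q),
      sqrtDet_unitaryDiag_one_sq (V * U) (Real.rpow_nonneg ht.1 q)]
    module

lemma exists_tendsto_psdPow_inv_twoMean (hU : U 0 1 ≠ 0) (hs : s ∈ Set.Icc 0 1)
    (ht : t ∈ Set.Icc 0 1) :
    ∃ G : Matrix (Fin 2) (Fin 2) ℂ, G.PosSemidef ∧
      Tendsto (fun q : ℝ => psdPow (twoMean (unitaryDiag V ![1, (s ^ q) ^ 2])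
        (unitaryDiag (V * U) ![1, (t ^ q) ^ 2])) q⁻¹) atTop (𝓝 G) ∧
      G.trace = ((s + t : ℝ) : ℂ) ∧ G.det = ((s * t : ℝ) : ℂ) := by
  have hpsd : ∀ q : ℝ, (twoMean (unitaryDiag V ![1, (s ^ q) ^ 2])
      (unitaryDiag (V * U) ![1, (t ^ q) ^ 2])).PosSemidef := fun q =>
    posSemidef_twoMean (posSemidef_unitaryDiag_one_sq V _) (posSemidef_unitaryDiag_one_sq _ _)
  rcases (le_max_of_le_left hs.1 : 0 ≤ max s t).eq_or_lt with hmax | hmax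
  · obtain rfl : s = 0 := le_antisymm (hmax ▸ le_max_left s t) hs.1
    obtain rfl : t = 0 := le_antisymm (hmax ▸ le_max_right 0 t) ht.1
    refine ⟨0, .zero, tendsto_const_nhds.congr' ?_, by simp, by simp⟩
    filter_upwards [eventually_ne_atTop 0] with q hq
    rw [Real.zero_rpow hq, twoMean, sqrtDet_unitaryDiag_one_sq V le_rfl,
      sqrtDet_unitaryDiag_one_sq (V * U) le_rfl, zero_smul, zero_smul, add_zero, smul_zero,
      psdPow_zero_left (inv_ne_zero hq)]
  · obtain ⟨K, htr, hK⟩ := exists_tendsto_rescaled_twoMean V hU hs ht hmax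
    rw [← max_add_min, ← max_mul_min]
    refine exists_tendsto_psdPow_inv hmax (le_min hs.1 ht.1) min_le_max hpsd (fun q => ?_) hK htr
    rw [det_twoMean (posSemidef_unitaryDiag_one_sq V _) (posSemidef_unitaryDiag_one_sq _ _)
      (meanDisc_unitaryDiag_one_sq_pos V hU _ _),
      sqrtDet_unitaryDiag_one_sq V (Real.rpow_nonneg hs.1 q),
      sqrtDet_unitaryDiag_one_sq (V * U) (Real.rpow_nonneg ht.1 q), max_mul_min,
      Real.mul_rpow hs.1 ht.1]

end NoncommutingCase

section MainLimit

lemma psdPow_unitaryDiag_two_mul (V : unitaryGroup (Fin 2) ℂ) {x : Fin 2 → ℝ} (hx0 : 0 < x 0)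
    (hx1 : 0 ≤ x 1) (q : ℝ) :
    psdPow (unitaryDiag V x) (2 * q) =
      (x 0 ^ q) ^ 2 • unitaryDiag V ![1, ((x 1 / x 0) ^ q) ^ 2] := by
  have hpow : ∀ {c : ℝ}, 0 ≤ c → c ^ (2 * q) = (c ^ q) ^ 2 := fun hc => by
    rw [mul_comm, Real.rpow_mul hc, Real.rpow_two]
  have hx0q := (Real.rpow_pos_of_pos hx0 q).ne'
  rw [psdPow_unitaryDiag, ← map_smul]
  congr 1
  refine funext (Fin.forall_fin_two.2 ⟨?_, ?_⟩)
  · simp [hpow hx0.le]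
  · simp only [hpow hx1, Real.div_rpow hx1 hx0.le, Pi.smul_apply, cons_val_one, cons_val_fin_one,
      smul_eq_mul]
    field_simp

lemma Gmat_unitaryDiag_two_mul (V : unitaryGroup (Fin 2) ℂ) {U : unitaryGroup (Fin 2) ℂ}
    (hU : U 0 1 ≠ 0) {x y : Fin 2 → ℝ} (hx0 : 0 < x 0) (hx1 : 0 ≤ x 1)
    (hy0 : 0 < y 0) (hy1 : 0 ≤ y 1) {q : ℝ} (hq : q ≠ 0) :
    Gmat (unitaryDiag V x) (unitaryDiag (V * U) y) (2 * q) =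
      (x 0 * y 0) • psdPow (twoMean (unitaryDiag V ![1, ((x 1 / x 0) ^ q) ^ 2])
        (unitaryDiag (V * U) ![1, ((y 1 / y 0) ^ q) ^ 2])) q⁻¹ := by
  have hxy : 0 ≤ x 0 * y 0 := (mul_pos hx0 hy0).le
  have hX := posSemidef_unitaryDiag_one_sq V ((x 1 / x 0) ^ q)
  have hY := posSemidef_unitaryDiag_one_sq (V * U) ((y 1 / y 0) ^ q)
  have hdisc : 0 < meanDisc ((x 0 ^ q) ^ 2 • unitaryDiag V ![1, ((x 1 / x 0) ^ q) ^ 2])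
      ((y 0 ^ q) ^ 2 • unitaryDiag (V * U) ![1, ((y 1 / y 0) ^ q) ^ 2]) := by
    have := meanDisc_unitaryDiag_one_sq_pos V hU ((x 1 / x 0) ^ q) ((y 1 / y 0) ^ q)
    rw [meanDisc_smul_smul _ _ (sq_nonneg _) (sq_nonneg _)]
    positivity
  rw [Gmat, psdPow_unitaryDiag_two_mul V hx0 hx1, psdPow_unitaryDiag_two_mul (V * U) hy0 hy1,
    geoMean_eq_twoMean (hX.smul (sq_nonneg _)) (hY.smul (sq_nonneg _)) hdisc,
    twoMean_smul_smul _ _ (sq_nonneg _) (sq_nonneg _), ← mul_pow, Real.sqrt_sq (by positivity),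
    ← Real.mul_rpow hx0.le hy0.le, psdPow_smul (posSemidef_twoMean hX hY) (Real.rpow_nonneg hxy q),
    show 2 / (2 * q) = q⁻¹ by field_simp, Real.rpow_rpow_inv hxy hq]

lemma exists_tendsto_Gmat_of_pos (V : unitaryGroup (Fin 2) ℂ) {U : unitaryGroup (Fin 2) ℂ}
    (hU : U 0 1 ≠ 0) {x y : Fin 2 → ℝ} (hx0 : 0 < x 0) (hx1 : x 1 ∈ Set.Icc 0 (x 0))
    (hy0 : 0 < y 0) (hy1 : y 1 ∈ Set.Icc 0 (y 0)) :
    ∃ G : Matrix (Fin 2) (Fin 2) ℂ, G.PosSemidef ∧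
      Tendsto (fun p : ℝ => Gmat (unitaryDiag V x) (unitaryDiag (V * U) y) p) atTop (𝓝 G) ∧
      G.trace = ((x 0 * y 1 + x 1 * y 0 : ℝ) : ℂ) ∧
      G.det = ((x 0 * y 1 * (x 1 * y 0) : ℝ) : ℂ) := by
  obtain ⟨G, hG, hlim, htr, hdet⟩ := exists_tendsto_psdPow_inv_twoMean V hU
    ⟨div_nonneg hx1.1 hx0.le, (div_le_one hx0).2 hx1.2⟩
    ⟨div_nonneg hy1.1 hy0.le, (div_le_one hy0).2 hy1.2⟩
  refine ⟨(x 0 * y 0) • G, hG.smul (mul_pos hx0 hy0).le, ?_, ?_, ?_⟩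
  · refine ((hlim.comp (tendsto_id.atTop_div_const two_pos)).const_smul (x 0 * y 0)).congr' ?_
    filter_upwards [eventually_ne_atTop 0] with p hp
    simpa only [mul_div_cancel₀ p two_ne_zero, Function.comp_apply, id] using
      (Gmat_unitaryDiag_two_mul V hU hx0 hx1.1 hy0 hy1.1 (div_ne_zero hp two_ne_zero)).symm
  · rw [trace_smul, htr, Complex.real_smul, ← Complex.ofReal_mul]
    congr 1
    field_simp
    ring
  · rw [det_smul_of_tower, hdet, Complex.real_smul, ← Complex.ofReal_mul, Fintype.card_fin]
    congr 1
    field_simp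

lemma exists_tendsto_Gmat (V : unitaryGroup (Fin 2) ℂ) {U : unitaryGroup (Fin 2) ℂ}
    (hU : U 0 1 ≠ 0) {x y : Fin 2 → ℝ} (hx : ∀ i, 0 ≤ x i) (hx10 : x 1 ≤ x 0)
    (hy : ∀ i, 0 ≤ y i) (hy10 : y 1 ≤ y 0) :
    ∃ G : Matrix (Fin 2) (Fin 2) ℂ, G.PosSemidef ∧
      Tendsto (fun p : ℝ => Gmat (unitaryDiag V x) (unitaryDiag (V * U) y) p) atTop (𝓝 G) ∧
      G.trace = ((x 0 * y 1 + x 1 * y 0 : ℝ) : ℂ) ∧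
      G.det = ((x 0 * y 1 * (x 1 * y 0) : ℝ) : ℂ) := by
  have hzero : ∀ {z : Fin 2 → ℝ}, (∀ i, 0 ≤ z i) → z 1 ≤ z 0 → 0 = z 0 → z = 0 := fun hz hz10 hz0 =>
    funext (Fin.forall_fin_two.2 ⟨hz0.symm, (hz10.trans hz0.ge).antisymm (hz 1)⟩)
  rcases (hx 0).eq_or_lt with hx0 | hx0
  · obtain rfl := hzero hx hx10 hx0
    refine ⟨0, .zero, ?_, by simp, by simp⟩
    simpa only [map_zero, zero_mul] using tendsto_Gmat_unitaryDiag (V * U) hx hy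
  rcases (hy 0).eq_or_lt with hy0 | hy0
  · obtain rfl := hzero hy hy10 hy0
    refine ⟨0, .zero, ?_, by simp, by simp⟩
    simpa only [map_zero, mul_zero] using tendsto_Gmat_unitaryDiag V hx hy
  exact exists_tendsto_Gmat_of_pos V hU hx0 ⟨hx 1, hx10⟩ hy0 ⟨hy 1, hy10⟩

lemma eigsDesc_eq_of_trace_of_det {G : Matrix (Fin 2) (Fin 2) ℂ} (hG : G.IsHermitian) {u v : ℝ}
    (hvu : v ≤ u) (htr : G.trace = ((u + v : ℝ) : ℂ)) (hdet : G.det = ((u * v : ℝ) : ℂ)) :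
    eigsDesc G = ![u, v] := by
  rw [eigsDesc, dif_pos hG]
  set e := hG.eigenvalues
  set σ := Tuple.sort e
  have hσ : e (σ 0) ≤ e (σ 1) := Tuple.monotone_sort e (Fin.zero_le 1)
  have hsum : e (σ 0) + e (σ 1) = u + v := by
    rw [← Fin.sum_univ_two (fun i => e (σ i)), Equiv.sum_comp σ e]
    exact Complex.ofReal_injective (by
      rw [← htr, hG.trace_eq_sum_eigenvalues, Complex.ofReal_sum]
      rfl)
  have hprod : e (σ 0) * e (σ 1) = u * v := by
    rw [← Fin.prod_univ_two (fun i => e (σ i)), Equiv.prod_comp σ e]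
    exact Complex.ofReal_injective (by
      rw [← hdet, hG.det_eq_prod_eigenvalues, Complex.ofReal_prod]
      rfl)
  have hroot : (e (σ 1) - u) * (e (σ 1) - v) = 0 := by
    linear_combination e (σ 1) * hsum - hprod
  have hmax : e (σ 1) = u := by
    rcases mul_eq_zero.1 hroot with h | h <;> linarith
  exact funext (Fin.forall_fin_two.2 ⟨hmax, show e (σ 0) = v by linarith⟩)

end MainLimit

/-- For `2×2` positive semidefinite matrices, `G_p = (A^p # B^p)^{2/p}` converges as
`p → ∞` to a positive semidefinite matrix whose decreasingly ordered eigenvalues are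
`(a_1 b_1, a_2 b_2)` if `(V*W)_{12} = 0` and
`(max{a_1 b_2, a_2 b_1}, min{a_1 b_2, a_2 b_1})` otherwise. -/
theorem geometric_mean_two_by_two_limit
    (A B V W : Matrix (Fin 2) (Fin 2) ℂ) (a b : Fin 2 → ℝ)
    (hA : A.PosSemidef) (hB : B.PosSemidef)
    (hV : V ∈ Matrix.unitaryGroup (Fin 2) ℂ)
    (hW : W ∈ Matrix.unitaryGroup (Fin 2) ℂ)
    (ha : a 1 ≤ a 0) (hb : b 1 ≤ b 0)
    (ha0 : ∀ i, 0 ≤ a i) (hb0 : ∀ i, 0 ≤ b i)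
    (hAd : A = V * Matrix.diagonal (fun i => (a i : ℂ)) * Vᴴ)
    (hBd : B = W * Matrix.diagonal (fun i => (b i : ℂ)) * Wᴴ) :
    ∃ G : Matrix (Fin 2) (Fin 2) ℂ, G.PosSemidef ∧
      Tendsto (fun p : ℝ => Gmat A B p) atTop (𝓝 G) ∧
      eigsDesc G =
        (if (Vᴴ * W) 0 1 = 0 then ![a 0 * b 0, a 1 * b 1]
          else ![max (a 0 * b 1) (a 1 * b 0), min (a 0 * b 1) (a 1 * b 0)]) := by
  lift V to unitaryGroup (Fin 2) ℂ using hV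
  lift W to unitaryGroup (Fin 2) ℂ using hW
  obtain ⟨U, rfl⟩ : ∃ U, W = V * U := ⟨V⁻¹ * W, (mul_inv_cancel_left V W).symm⟩
  obtain rfl : A = unitaryDiag V a := hAd
  obtain rfl : B = unitaryDiag (V * U) b := hBd
  have hoverlap : (V : Matrix (Fin 2) (Fin 2) ℂ)ᴴ * (V * U : unitaryGroup (Fin 2) ℂ) = U := by
    rw [Submonoid.coe_mul, ← Matrix.mul_assoc, ← star_eq_conjTranspose,
      Unitary.star_mul_self_of_mem V.2, Matrix.one_mul]
  rw [hoverlap]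
  split_ifs with hU
  · have hab : ∀ i, 0 ≤ (a * b) i := fun i => mul_nonneg (ha0 i) (hb0 i)
    rw [unitaryDiag_mul_left_of_isDiag V (isDiag_of_apply_zero_one_eq_zero hU)]
    exact ⟨_, posSemidef_unitaryDiag V hab, tendsto_Gmat_unitaryDiag V ha0 hb0,
      eigsDesc_eq_of_trace_of_det (isHermitian_unitaryDiag V _) (mul_le_mul ha hb (hb0 1) (ha0 0))
        (by rw [trace_unitaryDiag, Fin.sum_univ_two]; rfl)
        (by rw [det_unitaryDiag, Fin.prod_univ_two]; rfl)⟩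
  · obtain ⟨G, hG, hlim, htr, hdet⟩ := exists_tendsto_Gmat V hU ha0 ha hb0 hb
    exact ⟨G, hG, hlim, eigsDesc_eq_of_trace_of_det hG.isHermitian min_le_max
      (by rwa [max_add_min]) (by rwa [max_mul_min])⟩
end
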